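/- arXiv:2003.02521 — 2 statements merged into one kernel-verified Lean document; each statement's English description precedes it below -/
import Mathlib

section
/- (Main Theorem) Conjunctions of functional dependencies and unary inclusion dependencies are finitely controllable up to finite closure: for any finite set Σ of FDs and UIDs, any finite instance I₀, and any Boolean conjunctive query q, we have (I₀, Σ) ⊨_fin q if and only if (I₀, Σ*) ⊨_unr q, where Σ* is the finite closure of Σ. -/
namespace FQA

/-- A relational signature: a finite set of relation names, each with an arity `≥ 1`. -/
structure Sig where
  Rel : Type
  rel_fin : Finite Rel
  ar : Rel → ℕ
  ar_pos : ∀ R, 1 ≤ ar R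

/-- The positions of a signature: pairs of a relation and an index into its arity. -/
abbrev Sig.Pos (σ : Sig) : Type := Σ R : σ.Rel, Fin (σ.ar R)

/-- A fact `R(a₁, …, a_{ar R})` with elements from `α`. -/
abbrev Fact (σ : Sig) (α : Type) : Type := Σ R : σ.Rel, Fin (σ.ar R) → α

/-- An instance is a set of facts. -/
abbrev Inst (σ : Sig) (α : Type) : Type := Set (Fact σ α)

variable {σ : Sig} {α β : Type}

/-- Element `a` occurs at position `p` in some fact of the instance `I`. -/
def occursAt (I : Inst σ α) (p : σ.Pos) (a : α) : Prop :=
  ∃ t : Fin (σ.ar p.1) → α, (⟨p.1, t⟩ : Fact σ α) ∈ I ∧ t p.2 = a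

/-- The active domain of an instance: the elements occurring in some fact. -/
def activeDom (I : Inst σ α) : Set α :=
  {a | ∃ F : Fact σ α, F ∈ I ∧ ∃ i, F.2 i = a}

/-- A unary inclusion dependency `src ⊆ dst` (nontrivial: `src ≠ dst`). -/
structure UID (σ : Sig) where
  src : σ.Pos
  dst : σ.Pos
  ne : src ≠ dst

/-- The reverse of a UID. -/
def UID.rev (τ : UID σ) : UID σ := ⟨τ.dst, τ.src, τ.ne.symm⟩

/-- An instance satisfies a UID if every element occurring at `src` also occurs at `dst`. -/
def satUID (I : Inst σ α) (τ : UID σ) : Prop :=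
  ∀ a, occursAt I τ.src a → occursAt I τ.dst a

/-- A functional dependency `R^L → R^r`, with `L` nonempty and `r ∉ L`. -/
structure FD (σ : Sig) where
  rel : σ.Rel
  lhs : Set (Fin (σ.ar rel))
  rhs : Fin (σ.ar rel)
  lhs_nonempty : lhs.Nonempty
  rhs_not_mem : rhs ∉ lhs

/-- An instance satisfies an FD if any two facts of `rel` agreeing on `lhs` agree on `rhs`. -/
def satFD (I : Inst σ α) (φ : FD σ) : Prop :=
  ∀ t u : Fin (σ.ar φ.rel) → α,
    (⟨φ.rel, t⟩ : Fact σ α) ∈ I → (⟨φ.rel, u⟩ : Fact σ α) ∈ I →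
    (∀ i ∈ φ.lhs, t i = u i) → t φ.rhs = u φ.rhs

/-- A Boolean conjunctive query: existentially quantified variables `Fin nv` and a
conjunction (list) of constant-free atoms, in which every variable occurs. -/
structure CQ (σ : Sig) where
  nv : ℕ
  atoms : List (Fact σ (Fin nv))
  vars_occur : ∀ x : Fin nv, ∃ A ∈ atoms, ∃ i, A.2 i = x

/-- The size of a CQ: its number of atoms. -/
def CQ.size (q : CQ σ) : ℕ := q.atoms.length

/-- A Boolean CQ holds in an instance iff there is a homomorphism (a match) from its
atoms to facts of the instance. -/
def satCQ (I : Inst σ α) (q : CQ σ) : Prop :=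
  ∃ h : Fin q.nv → α, ∀ A ∈ q.atoms, (⟨A.1, fun i => h (A.2 i)⟩ : Fact σ α) ∈ I

/-- An instance satisfies a set of UIDs and a set of FDs. -/
def satAllC (I : Inst σ ℕ) (Su : Set (UID σ)) (Sf : Set (FD σ)) : Prop :=
  (∀ τ ∈ Su, satUID I τ) ∧ (∀ φ ∈ Sf, satFD I φ)

/-- Unrestricted open-world entailment: every (finite or infinite) superinstance of `I₀`
satisfying the constraints satisfies `q`. -/
def unrEntails (I₀ : Inst σ ℕ) (Su : Set (UID σ)) (Sf : Set (FD σ)) (q : CQ σ) : Prop :=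
  ∀ I : Inst σ ℕ, I₀ ⊆ I → satAllC I Su Sf → satCQ I q

/-- Finite open-world entailment: every finite superinstance of `I₀` satisfying the
constraints satisfies `q`. -/
def finEntails (I₀ : Inst σ ℕ) (Su : Set (UID σ)) (Sf : Set (FD σ)) (q : CQ σ) : Prop :=
  ∀ I : Inst σ ℕ, I₀ ⊆ I → I.Finite → satAllC I Su Sf → satCQ I q

/-- A (nontrivial) UID is finitely implied by the constraints: it holds in every finite
instance satisfying them. -/
def finImpUID (Su : Set (UID σ)) (Sf : Set (FD σ)) (τ : UID σ) : Prop :=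
  ∀ I : Inst σ ℕ, I.Finite → satAllC I Su Sf → satUID I τ

/-- A (nontrivial) FD is finitely implied by the constraints: it holds in every finite
instance satisfying them. -/
def finImpFD (Su : Set (UID σ)) (Sf : Set (FD σ)) (φ : FD σ) : Prop :=
  ∀ I : Inst σ ℕ, I.Finite → satAllC I Su Sf → satFD I φ

/-!
Let `M` be a model of the finite closure that contains `I₀`. It suffices to find a finite model of
the constraints that contains `I₀` and in which every match of the query can be carried over to `M`.

The finitely implied UIDs form a preorder `Incl` on positions, and the finitely implied unary FDs
a preorder `Det` on the positions of each relation. Comparing the numbers of elements at the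
positions over all finite models yields a rank which is weakly increasing along `Incl`, weakly
decreasing along `Det`, and constant along a dependency only if that dependency is reversible.

An element of a chase of `I₀` is described by its kind, the history of its creation. The history is
truncated at a step which an FD does not determine from its result, and it is forgotten, leaving a
generic kind, after many reversible steps. The remaining steps increase the rank or the number of
reversible steps, so there are finitely many kinds. One then seeks numbers of elements of each kind
and of facts created for them, such that for every position occupied by a kind there are as many
slots for that kind as elements of it. The generic kinds can absorb any imbalance between
equivalent positions, and the numbers are found as a fixpoint of a monotone operator, which exists
because they grow by at most a constant factor from each level of kinds to the next. Each created
fact carries a label, of which a position shows a part chosen to match the FDs. Gluing the slots to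
the elements yields a finite pattern that satisfies the constraints.

Finally the pattern is replaced by a finite cover, given by permutations acting on bounded reduced
words. It has no short nontrivial cycles, so a match of a small query in it unfolds into `M`.
-/

noncomputable instance : Fintype σ.Rel := have := σ.rel_fin; Fintype.ofFinite _

/-! ### Renaming the elements of an instance -/

section Renaming

/-- The image of a fact under a renaming of elements. -/
def mapFact (f : α → β) (F : Fact σ α) : Fact σ β := ⟨F.1, fun i => f (F.2 i)⟩

/-- The image of an instance under a renaming of elements. -/
def mapInst (f : α → β) (I : Inst σ α) : Inst σ β := mapFact f '' I

theorem mem_activeDom {I : Inst σ α} {R : σ.Rel} {t : Fin (σ.ar R) → α}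
    (ht : (⟨R, t⟩ : Fact σ α) ∈ I) (i : Fin (σ.ar R)) : t i ∈ activeDom I :=
  ⟨_, ht, i, rfl⟩

theorem activeDom_finite {I : Inst σ α} (hI : I.Finite) : (activeDom I).Finite := by
  have h_union : activeDom I = ⋃ F ∈ I, Set.range F.2 := by
    ext a
    simp [activeDom]
  rw [h_union]
  exact hI.biUnion fun F _ => Set.finite_range _

variable {f : α → β} {I : Inst σ α}

theorem mem_mapInst {R : σ.Rel} {t : Fin (σ.ar R) → β} :
    (⟨R, t⟩ : Fact σ β) ∈ mapInst f I ↔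
      ∃ u : Fin (σ.ar R) → α, (⟨R, u⟩ : Fact σ α) ∈ I ∧ t = fun i => f (u i) := by
  constructor
  · rintro ⟨⟨R', u⟩, hu, h_eq⟩
    obtain ⟨rfl, h_heq⟩ := Sigma.mk.inj h_eq
    exact ⟨u, hu, (eq_of_heq h_heq).symm⟩
  · rintro ⟨u, hu, rfl⟩
    exact ⟨_, hu, rfl⟩

theorem satUID_mapInst {τ : UID σ} (hI : satUID I τ) : satUID (mapInst f I) τ := by
  rintro _ ⟨t, ht, rfl⟩
  obtain ⟨u, hu, rfl⟩ := mem_mapInst.1 ht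
  obtain ⟨u', hu', h_eq⟩ := hI _ ⟨u, hu, rfl⟩
  exact ⟨_, mem_mapInst.2 ⟨u', hu', rfl⟩, congrArg f h_eq⟩

theorem satFD_mapInst {φ : FD σ} (hf : Set.InjOn f (activeDom I)) (hI : satFD I φ) :
    satFD (mapInst f I) φ := by
  intro _ _ h_mem h_mem' h_agree
  obtain ⟨t, ht, rfl⟩ := mem_mapInst.1 h_mem
  obtain ⟨u, hu, rfl⟩ := mem_mapInst.1 h_mem'
  exact congrArg f <| hI t u ht hu fun i hi =>
    hf (mem_activeDom ht i) (mem_activeDom hu i) (h_agree i hi)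

theorem satCQ_of_mapInst {q : CQ σ} (hf : Set.InjOn f (activeDom I))
    (hq : satCQ (mapInst f I) q) : satCQ I q := by
  obtain ⟨g, hg⟩ := hq
  have h_lift : ∀ x, ∃ a ∈ activeDom I, f a = g x := by
    intro x
    obtain ⟨A, hA, i, rfl⟩ := q.vars_occur x
    obtain ⟨u, hu, h_eq⟩ := mem_mapInst.1 (hg A hA)
    exact ⟨u i, mem_activeDom hu i, (congrFun h_eq i).symm⟩
  choose g' hg'_mem hg' using h_lift
  refine ⟨g', fun A hA => ?_⟩
  obtain ⟨u, hu, h_eq⟩ := mem_mapInst.1 (hg A hA)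
  have h_u : (fun i => g' (A.2 i)) = u := funext fun i =>
    hf (hg'_mem _) (mem_activeDom hu i) ((hg' _).trans (congrFun h_eq i))
  rwa [h_u]

theorem exists_injOn_extension {A Y : Type} [Finite A] {v : A → ℕ} (hv : v.Injective)
    {emb : A → Y} (h_emb : emb.Injective) {s : Set Y} (hs : s.Countable) :
    ∃ ι : Y → ℕ, (∀ a, ι (emb a) = v a) ∧ Set.InjOn ι s := by
  obtain ⟨e, he⟩ := Set.countable_iff_exists_injOn.1 hs
  obtain ⟨b, hb⟩ := (Set.finite_range v).bddAbove
  have h_le : ∀ a, v a ≤ b := fun a => hb ⟨a, rfl⟩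
  let ι := Function.extend emb v fun y => b + 1 + e y
  have h_in : ∀ a, ι (emb a) = v a := fun a => h_emb.extend_apply _ _ a
  have h_out : ∀ y, (¬ ∃ a, emb a = y) → ι y = b + 1 + e y :=
    fun y hy => Function.extend_apply' _ _ _ hy
  refine ⟨ι, h_in, fun y hy y' hy' h_eq => ?_⟩
  by_cases hy_in : ∃ a, emb a = y <;> by_cases hy'_in : ∃ a, emb a = y'
  · obtain ⟨⟨a, rfl⟩, ⟨a', rfl⟩⟩ := hy_in, hy'_in
    rw [h_in, h_in] at h_eq
    rw [hv h_eq]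
  · obtain ⟨a, rfl⟩ := hy_in
    rw [h_in, h_out _ hy'_in] at h_eq
    have := h_le a
    omega
  · obtain ⟨a', rfl⟩ := hy'_in
    rw [h_in, h_out _ hy_in] at h_eq
    have := h_le a'
    omega
  · rw [h_out _ hy_in, h_out _ hy'_in] at h_eq
    exact he hy hy' (by omega)

theorem finEntails.satCQ_of_embedding {A Y : Type} [Finite A] {v : A → ℕ} (hv : v.Injective)
    {emb : A → Y} (h_emb : emb.Injective) {I : Inst σ A} {J : Inst σ Y} (hJ : J.Finite)
    (h_sub : mapInst emb I ⊆ J) {Su : Set (UID σ)} {Sf : Set (FD σ)} {q : CQ σ}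
    (hU : ∀ τ ∈ Su, satUID J τ) (hF : ∀ φ ∈ Sf, satFD J φ)
    (h : finEntails (mapInst v I) Su Sf q) : satCQ J q := by
  obtain ⟨ι, h_in, h_inj⟩ := exists_injOn_extension hv h_emb (activeDom_finite hJ).countable
  refine satCQ_of_mapInst h_inj <| h (mapInst ι J) ?_ (hJ.image _)
    ⟨fun τ hτ => satUID_mapInst (hU τ hτ), fun φ hφ => satFD_mapInst h_inj (hF φ hφ)⟩
  rintro _ ⟨⟨R, t⟩, ht, rfl⟩
  exact mem_mapInst.2 ⟨_, h_sub ⟨_, ht, rfl⟩, funext fun i => (h_in (t i)).symm⟩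

end Renaming

/-! ### Permutations of reduced words -/

section ReducedWords

variable {S : Type} {N : ℕ}

/-- Reduced words of length at most `N` over an alphabet of involutions `S`: no letter is
immediately repeated. -/
def ReducedWord (S : Type) (N : ℕ) : Type := {l : List S // l.IsChain (· ≠ ·) ∧ l.length ≤ N}

instance [Finite S] : Finite (ReducedWord S N) :=
  (List.finite_length_le S N).subset fun _ h => h.2

open Classical in
/-- Left multiplication of a reduced word by the involution `s`; words of the maximal length
`N` that would get longer are fixed. -/
noncomputable def toggle (N : ℕ) (s : S) (l : List S) : List S :=
  if l.head? = some s then l.tail else if l.length < N then s :: l else l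

theorem isChain_cons_iff_head?_ne {s : S} {l : List S} :
    (s :: l).IsChain (· ≠ ·) ↔ l.head? ≠ some s ∧ l.IsChain (· ≠ ·) := by
  cases l <;> simp [eq_comm]

theorem toggle_cons_self {s : S} {l : List S} : toggle N s (s :: l) = l := by
  simp [toggle]

theorem toggle_of_head?_ne {s : S} {l : List S} (hs : l.head? ≠ some s) (hl : l.length < N) :
    toggle N s l = s :: l := by
  simp [toggle, hs, hl]

theorem toggle_mem {s : S} {l : List S} (h : l.IsChain (· ≠ ·) ∧ l.length ≤ N) :
    (toggle N s l).IsChain (· ≠ ·) ∧ (toggle N s l).length ≤ N := by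
  unfold toggle
  split_ifs with h_head h_len
  · exact ⟨h.1.tail, by rw [List.length_tail]; exact (Nat.sub_le _ _).trans h.2⟩
  · exact ⟨isChain_cons_iff_head?_ne.2 ⟨h_head, h.1⟩, h_len⟩
  · exact h

theorem toggle_toggle {s : S} {l : List S} (h : l.IsChain (· ≠ ·) ∧ l.length ≤ N) :
    toggle N s (toggle N s l) = l := by
  by_cases h_head : l.head? = some s
  · obtain ⟨l, rfl⟩ : ∃ l', l = s :: l' := List.head?_eq_some_iff.1 h_head
    rw [toggle_cons_self, toggle_of_head?_ne (isChain_cons_iff_head?_ne.1 h.1).1 h.2]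
  · by_cases h_len : l.length < N
    · rw [toggle_of_head?_ne h_head h_len, toggle_cons_self]
    · simp only [toggle, h_head, h_len, if_false]

/-- The empty word. -/
def emptyWord (S : Type) (N : ℕ) : ReducedWord S N := ⟨[], by simp⟩

/-- The permutation of reduced words by which a letter acts. -/
noncomputable def letterPerm (N : ℕ) (s : S) : Equiv.Perm (ReducedWord S N) :=
  Function.Involutive.toPerm (fun l => ⟨toggle N s l.1, toggle_mem l.2⟩)
    fun l => Subtype.ext (toggle_toggle l.2)

theorem letterPerm_mul_cancel_left (s : S) (g : Equiv.Perm (ReducedWord S N)) :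
    letterPerm N s * (letterPerm N s * g) = g :=
  Equiv.ext fun l => Subtype.ext (toggle_toggle (g l).2)

/-- The permutation of reduced words by which a word acts. -/
noncomputable def wordPerm (N : ℕ) (l : List S) : Equiv.Perm (ReducedWord S N) :=
  (l.map (letterPerm N)).prod

theorem wordPerm_cons (s : S) (l : List S) :
    wordPerm N (s :: l) = letterPerm N s * wordPerm N l := by
  rw [wordPerm, List.map_cons, List.prod_cons, wordPerm]

theorem wordPerm_toggle {s : S} {l : List S} (hl : l.length < N) :
    wordPerm N (toggle N s l) = letterPerm N s * wordPerm N l := by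
  by_cases h_head : l.head? = some s
  · obtain ⟨l, rfl⟩ : ∃ l', l = s :: l' := List.head?_eq_some_iff.1 h_head
    rw [toggle_cons_self, wordPerm_cons, letterPerm_mul_cancel_left]
  · rw [toggle_of_head?_ne h_head hl, wordPerm_cons]

theorem wordPerm_apply_emptyWord : ∀ l : List S, l.IsChain (· ≠ ·) → l.length ≤ N →
    (wordPerm N l (emptyWord S N)).1 = l
  | [], _, _ => rfl
  | s :: l, h, hl => by
    obtain ⟨h_head, h_chain⟩ := isChain_cons_iff_head?_ne.1 h
    have ih := wordPerm_apply_emptyWord l h_chain (Nat.le_of_succ_le hl)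
    rw [wordPerm_cons, Equiv.Perm.mul_apply]
    exact (congrArg (toggle N s) ih).trans (toggle_of_head?_ne h_head hl)

theorem wordPerm_injOn :
    Set.InjOn (wordPerm N) {l : List S | l.IsChain (· ≠ ·) ∧ l.length ≤ N} := by
  intro l hl l' hl' h_eq
  rw [← wordPerm_apply_emptyWord l hl.1 hl.2, h_eq, wordPerm_apply_emptyWord l' hl'.1 hl'.2]

end ReducedWords

/-! ### Patterns and their finite covers -/

section Patterns

variable {S X B : Type}

/-- A pattern for building instances: a set of facts over *slots*, together with the map `elt`
that tells which slots are to be glued to one element. The slots of one fact share a bag, and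
the bags are the pieces that are glued along elements. -/
structure Pattern (σ : Sig) (S X B : Type) where
  facts : Inst σ S
  elt : S → X
  bag : S → B
  bag_eq : ∀ {R : σ.Rel} {t : Fin (σ.ar R) → S}, (⟨R, t⟩ : Fact σ S) ∈ facts →
    ∀ i j, bag (t i) = bag (t j)

/-- `P.Path b₀ w b` says that `w` is a reduced path from the bag `b₀` to the bag `b`. A move
leaves a bag through a slot `s` and enters another one through a slot `s'` glued to `s`; the
word lists these slots, the most recent one first. -/
inductive Pattern.Path (P : Pattern σ S X B) (b₀ : B) : List S → B → Prop
  | nil : P.Path b₀ [] b₀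
  | cons {w : List S} {s s' : S} : P.Path b₀ w (P.bag s) → w.head? ≠ some s → s' ≠ s →
      P.elt s' = P.elt s → P.Path b₀ (s' :: s :: w) (P.bag s')

/-- A back-and-forth system between a pattern and an instance `M`: `Good j b f` means that `f`
maps the bag `b` to `M` in a way that can be continued along `j` further moves. -/
structure Pattern.Unfolding (P : Pattern σ S X B) (M : Inst σ β) (n : ℕ) where
  Good : ℕ → B → (S → β) → Prop
  map_mem : ∀ {j f} {R : σ.Rel} {t : Fin (σ.ar R) → S} (i), (⟨R, t⟩ : Fact σ S) ∈ P.facts →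
    Good j (P.bag (t i)) f → (⟨R, fun i => f (t i)⟩ : Fact σ β) ∈ M
  step : ∀ {j f s s'}, P.elt s' = P.elt s → Good (j + 1) (P.bag s) f →
    ∃ f', Good j (P.bag s') f' ∧ f' s' = f s
  exists_good : ∀ s, ∃ f, Good n (P.bag s) f

namespace Pattern

variable {P : Pattern σ S X B} {M : Inst σ β} {b₀ b : B} {w : List S} {n N : ℕ}

theorem Path.isChain (h : P.Path b₀ w b) : w.IsChain (· ≠ ·) := by
  induction h with
  | nil => exact .nil
  | cons _ h_head h_ne _ ih =>
    exact List.isChain_cons_cons.2 ⟨h_ne, isChain_cons_iff_head?_ne.2 ⟨h_head, ih⟩⟩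

theorem Path.exists_step {s s' : S} (h : P.Path b₀ w (P.bag s))
    (h_elt : P.elt s' = P.elt s) (h_ne : s' ≠ s) :
    ∃ w', P.Path b₀ w' (P.bag s') ∧ w'.length ≤ w.length + 2 ∧
      wordPerm N w' = letterPerm N s' * (letterPerm N s * wordPerm N w) := by
  by_cases h_head : w.head? = some s
  · generalize P.bag s = b at h
    cases h with
    | nil => simp at h_head
    | @cons u r _ h_path h_head_r _ h_elt_r =>
      obtain rfl : _ = s := Option.some_inj.1 h_head
      simp only [wordPerm_cons, letterPerm_mul_cancel_left]
      by_cases h_back : s' = r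
      · subst h_back
        exact ⟨u, h_path, by simp only [List.length_cons]; omega,
          (letterPerm_mul_cancel_left _ _).symm⟩
      · exact ⟨s' :: r :: u, .cons h_path h_head_r h_back (h_elt.trans h_elt_r), by simp,
          by simp only [wordPerm_cons]⟩
  · exact ⟨s' :: s :: w, .cons h h_head h_ne h_elt, by simp, by simp only [wordPerm_cons]⟩

open Classical in
/-- The map obtained from `f₀` by following an unfolding along a path (junk off paths of length
at most `2 * n`). -/
noncomputable def Unfolding.develop (U : P.Unfolding M n) (f₀ : S → β) : List S → S → β
  | s' :: s :: w =>
    if h : ∃ f', U.Good (n - (w.length / 2 + 1)) (P.bag s') f' ∧ f' s' = U.develop f₀ w s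
    then h.choose else f₀
  | _ => f₀

namespace Unfolding

variable (U : P.Unfolding M n) {f₀ : S → β}

theorem develop_cons_cons {w : List S} {s s' : S}
    (h : ∃ f', U.Good (n - (w.length / 2 + 1)) (P.bag s') f' ∧ f' s' = U.develop f₀ w s) :
    U.Good (n - (w.length / 2 + 1)) (P.bag s') (U.develop f₀ (s' :: s :: w)) ∧
      U.develop f₀ (s' :: s :: w) s' = U.develop f₀ w s := by
  rw [develop, dif_pos h]
  exact h.choose_spec

theorem good_develop (h₀ : U.Good n b₀ f₀) (h : P.Path b₀ w b) (hw : w.length ≤ 2 * n) :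
    U.Good (n - w.length / 2) b (U.develop f₀ w) ∧
      ∀ s' s u, w = s' :: s :: u → U.develop f₀ w s' = U.develop f₀ u s := by
  induction h with
  | nil => exact ⟨by simpa [develop] using h₀, by simp⟩
  | @cons w s s' _ _ _ h_elt ih =>
    simp only [List.length_cons] at hw
    have h_good := (ih (by omega)).1
    rw [show n - w.length / 2 = n - (w.length / 2 + 1) + 1 by omega] at h_good
    obtain ⟨h_good', h_eq⟩ := U.develop_cons_cons (U.step h_elt h_good)
    refine ⟨?_, ?_⟩
    · rwa [show (s' :: s :: w).length / 2 = w.length / 2 + 1 by simp only [List.length_cons]; omega]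
    · rintro _ _ _ ⟨rfl, rfl, rfl⟩
      exact h_eq

theorem exists_toggle_eq_cons (h₀ : U.Good n b₀ f₀) (h : P.Path b₀ w b)
    (hw : w.length ≤ 2 * n) (hN : 2 * n < N) (s : S) :
    ∃ s' u, toggle N s w = s' :: u ∧ U.develop f₀ w s = U.develop f₀ u s' := by
  by_cases h_head : w.head? = some s
  · have h_eq := (U.good_develop h₀ h hw).2
    cases h with
    | nil => simp at h_head
    | @cons u s' =>
      obtain rfl : _ = s := Option.some_inj.1 h_head
      exact ⟨s', u, toggle_cons_self, h_eq _ _ _ rfl⟩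
  · exact ⟨s, w, toggle_of_head?_ne h_head (by omega), rfl⟩

theorem develop_eq_of_letterPerm_mul_eq (h₀ : U.Good n b₀ f₀) {w' : List S} {b' : B}
    (h : P.Path b₀ w b) (h' : P.Path b₀ w' b') (hw : w.length ≤ 2 * n)
    (hw' : w'.length ≤ 2 * n) (hN : 2 * n < N) {s s' : S}
    (h_eq : letterPerm N s * wordPerm N w = letterPerm N s' * wordPerm N w') :
    U.develop f₀ w s = U.develop f₀ w' s' := by
  rw [← wordPerm_toggle (by omega), ← wordPerm_toggle (by omega)] at h_eq
  have h_word := wordPerm_injOn (toggle_mem ⟨h.isChain, by omega⟩)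
    (toggle_mem ⟨h'.isChain, by omega⟩) h_eq
  obtain ⟨r, u, h_toggle, h_dev⟩ := U.exists_toggle_eq_cons h₀ h hw hN s
  obtain ⟨r', u', h_toggle', h_dev'⟩ := U.exists_toggle_eq_cons h₀ h' hw' hN s'
  rw [h_toggle, h_toggle'] at h_word
  obtain ⟨rfl, rfl⟩ := List.cons_eq_cons.1 h_word
  rw [h_dev, h_dev']

end Unfolding

/-- The `N`-th cover of a pattern: one copy of each fact for every permutation `g` of the reduced
words of length at most `N`, where the slot `s` of the copy `g` is glued to `(elt s, s * g)`. -/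
def cover (P : Pattern σ S X B) (N : ℕ) : Inst σ (X × Equiv.Perm (ReducedWord S N)) :=
  ⋃ g, mapInst (fun s => (P.elt s, letterPerm N s * g)) P.facts

theorem mem_cover {R : σ.Rel} {t : Fin (σ.ar R) → X × Equiv.Perm (ReducedWord S N)} :
    (⟨R, t⟩ : Fact σ _) ∈ P.cover N ↔ ∃ (f : Fin (σ.ar R) → S) (g : _),
      (⟨R, f⟩ : Fact σ S) ∈ P.facts ∧ t = fun i => (P.elt (f i), letterPerm N (f i) * g) := by
  rw [cover, Set.mem_iUnion]
  simp only [mem_mapInst]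
  exact exists_comm

theorem cover_finite [Finite S] (P : Pattern σ S X B) (N : ℕ) : (P.cover N).Finite :=
  Set.finite_iUnion fun _ => (Set.toFinite P.facts).image _

theorem satUID_cover {τ : UID σ} (h : ∀ s, occursAt P.facts τ.src s →
    ∃ s', P.elt s' = P.elt s ∧ occursAt P.facts τ.dst s') : satUID (P.cover N) τ := by
  rintro _ ⟨t, ht, rfl⟩
  obtain ⟨f, g, hf, rfl⟩ := mem_cover.1 ht
  obtain ⟨_, h_elt, f', hf', rfl⟩ := h _ ⟨f, hf, rfl⟩
  exact ⟨_, mem_cover.2 ⟨f', letterPerm N (f' τ.dst.2) * (letterPerm N (f τ.src.2) * g), hf', rfl⟩,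
    Prod.ext h_elt (letterPerm_mul_cancel_left _ _)⟩

theorem satFD_cover {φ : FD σ} (h_inj : ∀ p s s', occursAt P.facts p s →
    occursAt P.facts p s' → P.elt s = P.elt s' → s = s') (h : satFD P.facts φ) :
    satFD (P.cover N) φ := by
  intro _ _ h_mem h_mem' h_agree
  obtain ⟨f, g, hf, rfl⟩ := mem_cover.1 h_mem
  obtain ⟨f', g', hf', rfl⟩ := mem_cover.1 h_mem'
  have h_lhs : ∀ i ∈ φ.lhs, f i = f' i := fun i hi =>
    h_inj ⟨_, i⟩ _ _ ⟨f, hf, rfl⟩ ⟨f', hf', rfl⟩ (congrArg Prod.fst (h_agree i hi))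
  obtain ⟨i, hi⟩ := φ.lhs_nonempty
  obtain rfl : g = g' := by
    have h_perm : letterPerm N (f i) * g = letterPerm N (f' i) * g' :=
      congrArg Prod.snd (h_agree i hi)
    rwa [h_lhs i hi, mul_right_inj] at h_perm
  simp only [h f f' hf hf' h_lhs]

/-- A match of `q` in a cover, with a fact of the pattern and a copy of it chosen for each
atom. -/
structure CoverMatch (P : Pattern σ S X B) (N : ℕ) (q : CQ σ) where
  toFun : Fin q.nv → X × Equiv.Perm (ReducedWord S N)
  slot : ∀ i : Fin q.atoms.length, Fin (σ.ar (q.atoms.get i).1) → S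
  copy : Fin q.atoms.length → Equiv.Perm (ReducedWord S N)
  slot_mem : ∀ i, (⟨(q.atoms.get i).1, slot i⟩ : Fact σ S) ∈ P.facts
  toFun_eq : ∀ i j, toFun ((q.atoms.get i).2 j) =
    (P.elt (slot i j), letterPerm N (slot i j) * copy i)

theorem nonempty_coverMatch {q : CQ σ} (hq : satCQ (P.cover N) q) :
    Nonempty (P.CoverMatch N q) := by
  obtain ⟨h, h_mem⟩ := hq
  choose slot copy h_slot h_eq using fun i : Fin q.atoms.length =>
    mem_cover.1 (h_mem (q.atoms.get i) (List.get_mem _ _))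
  exact ⟨⟨h, slot, copy, h_slot, fun i j => congrFun (h_eq i) j⟩⟩

end Pattern

namespace CQ

/-- The graph on the atoms of a query that joins atoms sharing a variable. -/
def sharingGraph (q : CQ σ) : SimpleGraph (Fin q.atoms.length) :=
  SimpleGraph.fromRel fun i i' => ∃ j j', (q.atoms.get i).2 j = (q.atoms.get i').2 j'

/-- A representative of the connected component of an atom in the sharing graph. -/
noncomputable def root (q : CQ σ) (i : Fin q.atoms.length) : Fin q.atoms.length :=
  (q.sharingGraph.connectedComponentMk i).out

variable {q : CQ σ}

theorem exists_shared_of_adj {i i' : Fin q.atoms.length} (h : q.sharingGraph.Adj i i') :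
    ∃ j j', (q.atoms.get i).2 j = (q.atoms.get i').2 j' := by
  rcases ((SimpleGraph.fromRel_adj _ _ _).1 h).2 with ⟨j, j', h_eq⟩ | ⟨j, j', h_eq⟩
  · exact ⟨j, j', h_eq⟩
  · exact ⟨j', j, h_eq.symm⟩

theorem root_eq_of_shared {i i' : Fin q.atoms.length} {j j'}
    (h : (q.atoms.get i).2 j = (q.atoms.get i').2 j') : q.root i = q.root i' := by
  by_cases hi : i = i'
  · rw [hi]
  · have h_adj : q.sharingGraph.Adj i i' :=
      (SimpleGraph.fromRel_adj _ _ _).2 ⟨hi, Or.inl ⟨j, j', h⟩⟩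
    rw [root, root, SimpleGraph.ConnectedComponent.sound h_adj.reachable]

theorem exists_walk_root (i : Fin q.atoms.length) :
    ∃ p : q.sharingGraph.Walk (q.root i) i, p.length ≤ q.size := by
  have h_reach : q.sharingGraph.Reachable (q.root i) i :=
    SimpleGraph.ConnectedComponent.exact (Quot.out_eq _)
  obtain ⟨p, hp⟩ := h_reach.exists_isPath
  exact ⟨p, by simpa [size] using hp.length_lt.le⟩

theorem exists_assignment {γ : Type} {v : ∀ i : Fin q.atoms.length,
    Fin (σ.ar (q.atoms.get i).1) → γ}
    (hv : ∀ i i' j j', (q.atoms.get i).2 j = (q.atoms.get i').2 j' → v i j = v i' j') :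
    ∃ h : Fin q.nv → γ, ∀ i j, h ((q.atoms.get i).2 j) = v i j := by
  have h_occ : ∀ x, ∃ (i : Fin q.atoms.length) (j : _), (q.atoms.get i).2 j = x := by
    intro x
    obtain ⟨A, hA, j, hj⟩ := q.vars_occur x
    obtain ⟨i, rfl⟩ := List.get_of_mem hA
    exact ⟨i, j, hj⟩
  choose i j hij using h_occ
  exact ⟨fun x => v (i x) (j x), fun i' j' => hv _ _ _ _ (hij _)⟩

end CQ

namespace Pattern

variable {P : Pattern σ S X B} {M : Inst σ β} {n N : ℕ} {q : CQ σ}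

namespace CoverMatch

variable (m : P.CoverMatch N q)

/-- The bag into which a match maps an atom. -/
def bag (i : Fin q.atoms.length) : B := P.bag (m.slot i ⟨0, σ.ar_pos _⟩)

theorem bag_slot (i : Fin q.atoms.length) (j) : P.bag (m.slot i j) = m.bag i :=
  P.bag_eq (m.slot_mem i) _ _

theorem exists_path_of_adj {b₀ : B} {w : List S} {i i' : Fin q.atoms.length}
    (h : P.Path b₀ w (m.bag i)) (h_adj : q.sharingGraph.Adj i i') :
    ∃ w', P.Path b₀ w' (m.bag i') ∧ w'.length ≤ w.length + 2 ∧
      m.copy i' * (m.copy i)⁻¹ * wordPerm N w = wordPerm N w' := by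
  obtain ⟨j, j', h_var⟩ := CQ.exists_shared_of_adj h_adj
  have h_eq := (m.toFun_eq i' j').symm.trans ((congrArg m.toFun h_var).symm.trans (m.toFun_eq i j))
  obtain ⟨h_elt, h_perm⟩ := Prod.ext_iff.1 h_eq
  dsimp only at h_elt h_perm
  by_cases h_slot : m.slot i' j' = m.slot i j
  · rw [h_slot, mul_right_inj] at h_perm
    refine ⟨w, ?_, by omega, by rw [h_perm, mul_inv_cancel, one_mul]⟩
    rwa [← m.bag_slot i' j', h_slot, m.bag_slot]
  · rw [← m.bag_slot i j] at h
    obtain ⟨w', h_path, h_len, h_word⟩ := h.exists_step (N := N) h_elt h_slot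
    refine ⟨w', m.bag_slot i' j' ▸ h_path, h_len, ?_⟩
    have h_copy : m.copy i' =
        letterPerm N (m.slot i' j') * (letterPerm N (m.slot i j) * m.copy i) := by
      rw [← h_perm, letterPerm_mul_cancel_left]
    rw [h_word, h_copy]
    group

theorem exists_path_of_walk {i i' : Fin q.atoms.length} (p : q.sharingGraph.Walk i i') :
    ∃ w, P.Path (m.bag i) w (m.bag i') ∧ w.length ≤ 2 * p.length ∧
      m.copy i' = wordPerm N w * m.copy i := by
  induction p using SimpleGraph.Walk.concatRec with
  | Hnil => exact ⟨[], .nil, by simp, by simp [wordPerm]⟩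
  | Hconcat p h_adj ih =>
    obtain ⟨w, h_path, h_len, h_copy⟩ := ih
    obtain ⟨w', h_path', h_len', h_word⟩ := m.exists_path_of_adj h_path h_adj
    refine ⟨w', h_path', by rw [SimpleGraph.Walk.length_concat]; omega, ?_⟩
    rw [← h_word, mul_assoc, ← h_copy, inv_mul_cancel_right]

theorem satCQ (m : P.CoverMatch N q) (U : P.Unfolding M n) (hq : q.size ≤ n) (hN : 2 * n < N) :
    satCQ M q := by
  have h_walk : ∀ i, ∃ w, P.Path (m.bag (q.root i)) w (m.bag i) ∧ w.length ≤ 2 * n ∧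
      m.copy i = wordPerm N w * m.copy (q.root i) := by
    intro i
    obtain ⟨p, hp⟩ := CQ.exists_walk_root i
    obtain ⟨w, h_path, h_len, h_copy⟩ := m.exists_path_of_walk p
    exact ⟨w, h_path, by omega, h_copy⟩
  choose w h_path h_len h_copy using h_walk
  choose f₀ hf₀ using fun i => U.exists_good (m.slot i ⟨0, σ.ar_pos _⟩)
  obtain ⟨h, hh⟩ := CQ.exists_assignment
    (v := fun i j => U.develop (f₀ (q.root i)) (w i) (m.slot i j)) fun i i' j j' h_var => by
      have h_root := CQ.root_eq_of_shared h_var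
      have h_path' := h_path i'
      have h_perm : letterPerm N (m.slot i j) * m.copy i =
          letterPerm N (m.slot i' j') * m.copy i' := by
        simpa only [m.toFun_eq] using congrArg Prod.snd (congrArg m.toFun h_var)
      rw [h_copy i, h_copy i', ← h_root, ← mul_assoc, ← mul_assoc, mul_left_inj] at h_perm
      rw [← h_root] at h_path' ⊢
      exact U.develop_eq_of_letterPerm_mul_eq (hf₀ _) (h_path i) h_path' (h_len i) (h_len i') hN
        h_perm
  refine ⟨h, fun A hA => ?_⟩
  obtain ⟨i, rfl⟩ := List.get_of_mem hA
  simp only [hh]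
  exact U.map_mem ⟨0, σ.ar_pos _⟩ (m.slot_mem i) (U.good_develop (hf₀ _) (h_path i) (h_len i)).1

end CoverMatch

theorem satCQ_of_cover (U : P.Unfolding M n) (hq : q.size ≤ n) (hN : 2 * n < N)
    (h : satCQ (P.cover N) q) : satCQ M q :=
  (nonempty_coverMatch h).some.satCQ U hq hN

theorem mapInst_subset_cover {γ : Type} {I : Inst σ γ} {ι : γ → S}
    (h : mapInst ι I ⊆ P.facts) :
    mapInst (fun c => (P.elt (ι c), letterPerm N (ι c))) I ⊆ P.cover N := by
  rintro _ ⟨⟨R, t⟩, ht, rfl⟩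
  exact mem_cover.2 ⟨fun i => ι (t i), 1, h ⟨_, ht, rfl⟩, by simp only [mul_one]⟩

end Pattern

end Patterns

/-! ### Dependencies with a rank -/

/-- A canonical representative of the equivalence class of `a` under a preorder `r`. -/
noncomputable def representative (r : α → α → Prop) [IsPreorder α r] (a : α) : α :=
  ofAntisymmetrization r (toAntisymmetrization r a)

section Representative

variable {r : α → α → Prop} [IsPreorder α r]

theorem antisymmRel_representative (a : α) : AntisymmRel r (representative r a) a :=
  Quotient.exact (s := AntisymmRel.setoid α r) (toAntisymmetrization_ofAntisymmetrization r _)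

theorem representative_eq {a b : α} (h : AntisymmRel r a b) :
    representative r a = representative r b :=
  congrArg (ofAntisymmetrization r) (Quotient.sound (s := AntisymmRel.setoid α r) h)

end Representative

/-- Unary inclusion dependencies `Incl` and unary functional dependencies `Det`, both closed
under implication, with a rank of the positions that is monotone along `Incl`, antitone along
`Det`, and constant only along reversible dependencies. -/
structure Dependencies (σ : Sig) where
  Incl : σ.Pos → σ.Pos → Prop
  Det : ∀ R : σ.Rel, Fin (σ.ar R) → Fin (σ.ar R) → Prop
  rank : σ.Pos → ℕ
  incl_isPreorder : IsPreorder σ.Pos Incl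
  det_isPreorder : ∀ R, IsPreorder _ (Det R)
  rank_pos : ∀ p, 0 < rank p
  rank_le_of_incl : ∀ {p q}, Incl p q → rank p ≤ rank q
  incl_of_rank_eq : ∀ {p q}, Incl p q → rank p = rank q → Incl q p
  rank_le_of_det : ∀ {R r q}, Det R r q → rank ⟨R, q⟩ ≤ rank ⟨R, r⟩
  det_of_rank_eq : ∀ {R r q}, Det R r q → rank ⟨R, q⟩ = rank ⟨R, r⟩ → Det R q r

namespace Dependencies

variable (D : Dependencies σ)

attribute [instance] incl_isPreorder det_isPreorder

theorem incl_refl (p : σ.Pos) : D.Incl p p := refl_of D.Incl p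

theorem incl_trans {p q r : σ.Pos} (h : D.Incl p q) (h' : D.Incl q r) : D.Incl p r :=
  trans_of D.Incl h h'

theorem det_refl {R : σ.Rel} (i : Fin (σ.ar R)) : D.Det R i i := refl_of (D.Det R) i

theorem det_trans {R : σ.Rel} {i j l : Fin (σ.ar R)} (h : D.Det R i j) (h' : D.Det R j l) :
    D.Det R i l :=
  trans_of (D.Det R) h h'

/-- The representative of a position up to mutual inclusion. -/
noncomputable def inclRep (p : σ.Pos) : σ.Pos := representative D.Incl p

/-- The representative of a position of `R` up to mutual determination. -/
noncomputable def detRep (R : σ.Rel) (i : Fin (σ.ar R)) : Fin (σ.ar R) :=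
  representative (D.Det R) i

theorem incl_inclRep (p : σ.Pos) : D.Incl p (D.inclRep p) := (antisymmRel_representative p).2

theorem inclRep_incl (p : σ.Pos) : D.Incl (D.inclRep p) p := (antisymmRel_representative p).1

theorem inclRep_eq {p q : σ.Pos} (h : D.Incl p q) (h' : D.Incl q p) :
    D.inclRep p = D.inclRep q :=
  representative_eq ⟨h, h'⟩

theorem inclRep_inclRep (p : σ.Pos) : D.inclRep (D.inclRep p) = D.inclRep p :=
  representative_eq (antisymmRel_representative p)

theorem rank_inclRep (p : σ.Pos) : D.rank (D.inclRep p) = D.rank p :=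
  (D.rank_le_of_incl (D.inclRep_incl p)).antisymm (D.rank_le_of_incl (D.incl_inclRep p))

theorem det_detRep {R : σ.Rel} (i : Fin (σ.ar R)) : D.Det R i (D.detRep R i) :=
  (antisymmRel_representative i).2

theorem detRep_det {R : σ.Rel} (i : Fin (σ.ar R)) : D.Det R (D.detRep R i) i :=
  (antisymmRel_representative i).1

theorem detRep_eq {R : σ.Rel} {i j : Fin (σ.ar R)} (h : D.Det R i j) (h' : D.Det R j i) :
    D.detRep R i = D.detRep R j :=
  representative_eq ⟨h, h'⟩

theorem detRep_detRep {R : σ.Rel} (i : Fin (σ.ar R)) :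
    D.detRep R (D.detRep R i) = D.detRep R i :=
  representative_eq (antisymmRel_representative i)

theorem rank_detRep {R : σ.Rel} (i : Fin (σ.ar R)) : D.rank ⟨R, D.detRep R i⟩ = D.rank ⟨R, i⟩ :=
  (D.rank_le_of_det (D.det_detRep i)).antisymm (D.rank_le_of_det (D.detRep_det i))

end Dependencies

/-! ### Kinds of elements -/

/-- Kinds of elements, recording how an element comes to exist: it belongs to the initial
instance, or it was created at the position `r` of an `R`-fact in which an element of kind `u`
sits at the position `q`. The kind `unknown` stands for a forgotten history, and `generic x` is
shared by the elements at the position `x` with a long history of reversible creations. -/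
inductive Kind (σ : Sig) (A : Type)
  | initial (a : A)
  | unknown
  | generic (x : σ.Pos)
  | child (u : Kind σ A) (R : σ.Rel) (q r : Fin (σ.ar R))

namespace Kind

variable {A : Type}

/-- The position at which an element was created; `none` for initial and unknown elements. -/
def entry : Kind σ A → Option σ.Pos
  | generic x => some x
  | child _ R _ r => some ⟨R, r⟩
  | _ => none

/-- The kind remembering only the last `n` creations. -/
def truncate : ℕ → Kind σ A → Kind σ A
  | 0, _ => unknown
  | n + 1, child u R q r => child (truncate n u) R q r
  | _ + 1, u => u

/-- The number of creations that a kind remembers. -/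
def depth : Kind σ A → ℕ
  | child u _ _ _ => depth u + 1
  | _ => 0

theorem depth_truncate_le : ∀ (n : ℕ) (u : Kind σ A), (u.truncate n).depth ≤ n
  | 0, _ => le_rfl
  | n + 1, child u _ _ _ => Nat.succ_le_succ (depth_truncate_le n u)
  | _ + 1, initial _ => Nat.zero_le _
  | _ + 1, unknown => Nat.zero_le _
  | _ + 1, generic _ => Nat.zero_le _

theorem finite_depth_le [Finite A] (n : ℕ) : {u : Kind σ A | u.depth ≤ n}.Finite := by
  have h_leaves : (Set.range initial ∪ {unknown} ∪ Set.range generic : Set (Kind σ A)).Finite :=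
    ((Set.finite_range _).union (Set.finite_singleton _)).union (Set.finite_range _)
  induction n with
  | zero =>
    refine h_leaves.subset ?_
    rintro (a | _ | x | ⟨u, R, q, r⟩) hu
    · exact Or.inl (Or.inl ⟨a, rfl⟩)
    · exact Or.inl (Or.inr rfl)
    · exact Or.inr ⟨x, rfl⟩
    · exact absurd hu (Nat.not_succ_le_zero _)
  | succ n ih =>
    have h_children : (⋃ (R : σ.Rel) (q : Fin (σ.ar R)) (r : Fin (σ.ar R)),
        (fun u => child u R q r) '' {u : Kind σ A | u.depth ≤ n}).Finite :=
      Set.finite_iUnion fun R => Set.finite_iUnion fun q => Set.finite_iUnion fun r => ih.image _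
    refine (h_leaves.union h_children).subset ?_
    rintro (a | _ | x | ⟨u, R, q, r⟩) hu
    · exact Or.inl (Or.inl (Or.inl ⟨a, rfl⟩))
    · exact Or.inl (Or.inl (Or.inr rfl))
    · exact Or.inl (Or.inr ⟨x, rfl⟩)
    · simp only [Set.mem_union, Set.mem_iUnion]
      exact Or.inr ⟨R, q, r, u, Nat.le_of_succ_le_succ hu, rfl⟩

end Kind

/-- The data from which the finite model is built: dependencies, an initial instance `I₀` that
satisfies the functional ones, and an instance `M` that contains the image of `I₀` under `val` and
satisfies the inclusion ones. Query matches of radius up to `radius` have to be reflected in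
`M`. -/
structure Context (σ : Sig) (A β : Type) extends Dependencies σ where
  I₀ : Inst σ A
  M : Inst σ β
  val : A → β
  radius : ℕ
  occursAt_of_incl : ∀ {p q a}, Incl p q → occursAt M p a → occursAt M q a
  eq_of_det : ∀ {R i j} {t u : Fin (σ.ar R) → A}, Det R i j → (⟨R, t⟩ : Fact σ A) ∈ I₀ →
    (⟨R, u⟩ : Fact σ A) ∈ I₀ → t i = u i → t j = u j
  map_mem : ∀ {R} {t : Fin (σ.ar R) → A}, (⟨R, t⟩ : Fact σ A) ∈ I₀ →
    (⟨R, fun i => val (t i)⟩ : Fact σ β) ∈ M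

namespace Context

variable {A : Type} (C : Context σ A β)

/-- The positions at which the elements of a kind occur. -/
def Occupies : Kind σ A → σ.Pos → Prop
  | .initial a, q => ∃ p, occursAt C.I₀ p a ∧ C.Incl p q
  | .unknown, _ => False
  | .generic x, q => C.Incl x q
  | .child _ R _ r, q => C.Incl ⟨R, r⟩ q

/-- The positions for which the elements of a kind have a fact created for them, the other
occupied positions being filled by facts created for other elements. A generic kind only spawns
at the representatives of mutually determined positions. -/
def Spawns : Kind σ A → σ.Pos → Prop
  | .initial a, q => (∃ p, occursAt C.I₀ p a ∧ C.Incl p q) ∧ ¬ occursAt C.I₀ q a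
  | .unknown, _ => False
  | .generic x, q => C.Incl x q ∧ (C.Incl q x → q.2 = C.detRep q.1 q.2)
  | .child _ R _ r, q => C.Incl ⟨R, r⟩ q ∧ q ≠ ⟨R, r⟩

/-- The creation of the position `r` of an `R`-fact for an element of kind `u` at the position
`q` only uses dependencies that also hold in the reverse direction. -/
def Reversible (u : Kind σ A) (R : σ.Rel) (q r : Fin (σ.ar R)) : Prop :=
  (∃ c, u.entry = some c ∧ C.Incl c ⟨R, q⟩ ∧ C.Incl ⟨R, q⟩ c) ∧ C.Det R q r ∧ C.Det R r q

/-- The number of successive reversible creations after which a kind becomes generic. -/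
def revBound : ℕ := C.radius + 2

open Classical in
/-- The number of reversible creations that end the history of a kind. -/
noncomputable def revDepth : Kind σ A → ℕ
  | .generic _ => C.revBound
  | .child u R q r => if C.Reversible u R q r then revDepth u + 1 else 0
  | _ => 0

/-- The lexicographic combination of the rank of the entry and the reversible depth. -/
noncomputable def level (u : Kind σ A) : ℕ :=
  u.entry.elim 0 fun c => (C.revBound + 1) * C.rank c + C.revDepth u

open Classical in
/-- The kind of the element at the position `r` of an `R`-fact created for an element of kind
`u` at the position `q`. -/
noncomputable def childKind (u : Kind σ A) (R : σ.Rel) (q r : Fin (σ.ar R)) : Kind σ A :=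
  if C.Det R r q then
    if C.Reversible u R q r ∧ C.revBound ≤ C.revDepth u + 1 then .generic (C.inclRep ⟨R, r⟩)
    else .child u R q r
  else .child (u.truncate (C.revBound - 1)) R q r

open Classical in
/-- The kinds of all elements of an `R`-fact created for an element of kind `u` at the position
`q`. -/
noncomputable def componentKind (u : Kind σ A) (R : σ.Rel) (q i : Fin (σ.ar R)) : Kind σ A :=
  if i = q then u else C.childKind u R q i

/-- The element `m` of `M` occurs wherever the kind does, and the last `j` steps of the history
that the kind describes can be retraced in `M` from `m`. -/
def Sim : ℕ → Kind σ A → β → Prop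
  | 0, u, m => ∀ p, C.Occupies u p → occursAt C.M p m
  | j + 1, u, m => (∀ p, C.Occupies u p → occursAt C.M p m) ∧
      match u with
      | .initial a => m = C.val a
      | .child u R q r => ∃ t, (⟨R, t⟩ : Fact σ β) ∈ C.M ∧ t r = m ∧ Sim j u (t q)
      | _ => True

variable {C}

section Occupies

variable {u : Kind σ A} {p q : σ.Pos}

theorem Spawns.occupies (h : C.Spawns u p) : C.Occupies u p := by
  cases u with
  | unknown => exact h
  | _ => exact h.1

theorem Occupies.trans_incl (h : C.Occupies u p) (h_incl : C.Incl p q) : C.Occupies u q := by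
  cases u with
  | initial a =>
    obtain ⟨p', h_occ, h_incl'⟩ := h
    exact ⟨p', h_occ, C.incl_trans h_incl' h_incl⟩
  | unknown => exact h
  | _ => exact C.incl_trans h h_incl

theorem occupies_iff_of_entry {c : σ.Pos} (h : u.entry = some c) :
    C.Occupies u p ↔ C.Incl c p := by
  cases u <;> cases h <;> rfl

theorem Occupies.of_truncate {n : ℕ} (h : C.Occupies (u.truncate n) p) : C.Occupies u p := by
  cases n with
  | zero => exact h.elim
  | succ n => cases u <;> exact h

theorem Occupies.truncate {n : ℕ} (h : C.Occupies u p) : C.Occupies (u.truncate (n + 1)) p := by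
  cases u <;> exact h

theorem occupies_childKind {R : σ.Rel} {q r : Fin (σ.ar R)} :
    C.Occupies (C.childKind u R q r) p ↔ C.Incl ⟨R, r⟩ p := by
  unfold childKind
  split_ifs
  · exact ⟨C.incl_trans (C.incl_inclRep _), C.incl_trans (C.inclRep_incl _)⟩
  · rfl
  · rfl

theorem Occupies.componentKind {R : σ.Rel} {q : Fin (σ.ar R)} (h : C.Occupies u ⟨R, q⟩)
    (i : Fin (σ.ar R)) : C.Occupies (C.componentKind u R q i) ⟨R, i⟩ := by
  unfold Context.componentKind
  split_ifs with h_eq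
  · rwa [h_eq]
  · exact occupies_childKind.2 (C.incl_refl _)

theorem eq_of_componentKind_eq {b : Kind σ A × Fin (σ.ar p.1)}
    (h : C.componentKind b.1 p.1 b.2 p.2 = u) (h_generic : u ≠ .generic (C.inclRep p))
    (h_child : ∀ u' q, u ≠ .child u' p.1 q p.2) : b = (u, p.2) := by
  unfold componentKind childKind at h
  split_ifs at h with h_eq
  · rw [← h, h_eq]
  · exact (h_generic h.symm).elim
  · exact (h_child _ _ h.symm).elim
  · exact (h_child _ _ h.symm).elim

end Occupies

namespace Sim

theorem occursAt {j : ℕ} {u : Kind σ A} {m : β} (h : C.Sim j u m) {p : σ.Pos}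
    (hp : C.Occupies u p) : occursAt C.M p m := by
  cases j with
  | zero => exact h p hp
  | succ j => exact h.1 p hp

theorem of_succ : ∀ {j : ℕ} {u : Kind σ A} {m : β}, C.Sim (j + 1) u m → C.Sim j u m
  | 0, _, _, h => h.1
  | _ + 1, .initial _, _, h => h
  | _ + 1, .unknown, _, h => h
  | _ + 1, .generic _, _, h => h
  | _ + 1, .child _ _ _ _, _, ⟨h_occ, t, ht, h_eq, h⟩ => ⟨h_occ, t, ht, h_eq, h.of_succ⟩

theorem truncate : ∀ {j n : ℕ} {u : Kind σ A} {m : β}, C.Sim j u m → C.Sim j (u.truncate n) m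
  | 0, _, _, _, h => fun p hp => h p hp.of_truncate
  | _ + 1, 0, _, _, _ => ⟨fun _ hp => hp.elim, trivial⟩
  | _ + 1, _ + 1, .initial _, _, h => h
  | _ + 1, _ + 1, .unknown, _, h => h
  | _ + 1, _ + 1, .generic _, _, h => h
  | _ + 1, _ + 1, .child _ _ _ _, _, ⟨h_occ, t, ht, h_eq, h⟩ => ⟨h_occ, t, ht, h_eq, h.truncate⟩

theorem of_truncate : ∀ {j n : ℕ} {u : Kind σ A} {m : β}, j < n → C.Sim j (u.truncate n) m →
    C.Sim j u m
  | 0, _ + 1, _, _, _, h => fun p hp => h p hp.truncate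
  | _ + 1, _ + 1, .initial _, _, _, h => h
  | _ + 1, _ + 1, .unknown, _, _, h => h
  | _ + 1, _ + 1, .generic _, _, _, h => h
  | _ + 1, _ + 1, .child _ _ _ _, _, hj, ⟨h_occ, t, ht, h_eq, h⟩ =>
    ⟨h_occ, t, ht, h_eq, of_truncate (Nat.lt_of_succ_lt_succ hj) h⟩

-- A reversible creation is retraced in `M` through any fact, by following the reverse inclusion.
theorem of_entry : ∀ {j : ℕ} {u : Kind σ A} {m : β} {c : σ.Pos}, u.entry = some c →
    j ≤ C.revDepth u → FQA.occursAt C.M c m → C.Sim j u m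
  | 0, _, _, _, hc, _, h => fun _ hp => C.occursAt_of_incl ((occupies_iff_of_entry hc).1 hp) h
  | _ + 1, .generic _, _, _, hc, _, h =>
    ⟨fun _ hp => C.occursAt_of_incl ((occupies_iff_of_entry hc).1 hp) h, trivial⟩
  | j + 1, .child u R q r, m, c, hc, hj, h => by
    refine ⟨fun p hp => C.occursAt_of_incl ((occupies_iff_of_entry hc).1 hp) h, ?_⟩
    obtain rfl : _ = c := Option.some_inj.1 hc
    obtain ⟨t, ht, rfl⟩ := h
    refine ⟨t, ht, rfl, ?_⟩
    rw [revDepth] at hj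
    split_ifs at hj with h_rev
    · obtain ⟨⟨c', hc', -, h_incl⟩, -⟩ := h_rev
      exact of_entry hc' (Nat.le_of_succ_le_succ hj) (C.occursAt_of_incl h_incl ⟨t, ht, rfl⟩)
    · omega

theorem componentKind {j : ℕ} {u : Kind σ A} {R : σ.Rel} {q : Fin (σ.ar R)}
    {t : Fin (σ.ar R) → β} (ht : (⟨R, t⟩ : Fact σ β) ∈ C.M) (h : C.Sim j u (t q))
    (i : Fin (σ.ar R)) : C.Sim j (C.componentKind u R q i) (t i) := by
  unfold Context.componentKind
  split_ifs with hi
  · rwa [hi]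
  have h_occ : ∀ p, C.Occupies (C.childKind u R q i) p → FQA.occursAt C.M p (t i) :=
    fun p hp => C.occursAt_of_incl (occupies_childKind.1 hp) ⟨t, ht, rfl⟩
  cases j with
  | zero => exact h_occ
  | succ j =>
    refine ⟨h_occ, ?_⟩
    unfold childKind
    split_ifs
    · trivial
    · exact ⟨t, ht, rfl, h.of_succ⟩
    · exact ⟨t, ht, rfl, h.of_succ.truncate⟩

theorem exists_fact_of_occupies {j : ℕ} {u : Kind σ A} {R : σ.Rel} {q : Fin (σ.ar R)} {m : β}
    (h : C.Sim j u m) (hq : C.Occupies u ⟨R, q⟩) :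
    ∃ t, (⟨R, t⟩ : Fact σ β) ∈ C.M ∧ t q = m ∧ ∀ i, C.Sim j (C.componentKind u R q i) (t i) := by
  obtain ⟨t, ht, rfl⟩ := h.occursAt hq
  exact ⟨t, ht, rfl, fun i => componentKind ht h i⟩

theorem exists_fact_of_childKind {j : ℕ} {u : Kind σ A} {R : σ.Rel} {q r : Fin (σ.ar R)} {m : β}
    (h : C.Sim (j + 1) (C.childKind u R q r) m) (hj : j < C.radius) :
    ∃ t, (⟨R, t⟩ : Fact σ β) ∈ C.M ∧ t r = m ∧ ∀ i, C.Sim j (C.componentKind u R q i) (t i) := by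
  suffices h_fact : ∃ t, (⟨R, t⟩ : Fact σ β) ∈ C.M ∧ t r = m ∧ C.Sim j u (t q) by
    obtain ⟨t, ht, h_eq, h_sim⟩ := h_fact
    exact ⟨t, ht, h_eq, fun i => componentKind ht h_sim i⟩
  have h_occ : FQA.occursAt C.M ⟨R, r⟩ m := h.occursAt (occupies_childKind.2 (C.incl_refl _))
  have h_bound : C.revBound = C.radius + 2 := rfl
  unfold childKind at h
  split_ifs at h with h_det h_rev
  · obtain ⟨t, ht, rfl⟩ := h_occ
    obtain ⟨⟨⟨c, hc, -, h_incl⟩, -⟩, h_depth⟩ := h_rev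
    exact ⟨t, ht, rfl, of_entry hc (by omega) (C.occursAt_of_incl h_incl ⟨t, ht, rfl⟩)⟩
  · exact h.2
  · obtain ⟨-, t, ht, h_eq, h_sim⟩ := h
    exact ⟨t, ht, h_eq, of_truncate (by omega) h_sim⟩

theorem initial (C : Context σ A β) (a : A) (j : ℕ) : C.Sim j (.initial a) (C.val a) := by
  have h_occ : ∀ p, C.Occupies (.initial a) p → FQA.occursAt C.M p (C.val a) := by
    rintro p ⟨q, ⟨t, ht, rfl⟩, h_incl⟩
    exact C.occursAt_of_incl h_incl ⟨_, C.map_mem ht, rfl⟩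
  cases j with
  | zero => exact h_occ
  | succ j => exact ⟨h_occ, rfl⟩

end Sim

variable (C)

/-- The kinds that are used in the construction. -/
structure Valid (u : Kind σ A) : Prop where
  depth_le : u.depth ≤ C.revBound + C.level u
  revDepth_lt : C.revDepth u < C.revBound ∨ ∃ x, u = .generic x
  inclRep_eq : ∀ x, u = .generic x → C.inclRep x = x
  exists_sim : ∃ m, C.Sim C.radius u m

/-- The largest rank of a position. -/
noncomputable def maxRank : ℕ := Finset.univ.sup C.rank

/-- An upper bound for the level of a valid kind. -/
noncomputable def maxLevel : ℕ := (C.revBound + 1) * C.maxRank + C.revBound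

variable {C} {u : Kind σ A}

theorem rank_le_maxRank (p : σ.Pos) : C.rank p ≤ C.maxRank :=
  Finset.le_sup (Finset.mem_univ p)

theorem Valid.revDepth_le (h : C.Valid u) : C.revDepth u ≤ C.revBound := by
  rcases h.revDepth_lt with h_lt | ⟨x, rfl⟩
  · exact h_lt.le
  · exact le_rfl

theorem level_of_entry {c : σ.Pos} (hc : u.entry = some c) :
    C.level u = (C.revBound + 1) * C.rank c + C.revDepth u := by
  rw [level, hc, Option.elim_some]

theorem level_of_entry_eq_none (hc : u.entry = none) : C.level u = 0 := by
  rw [level, hc, Option.elim_none]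

theorem Valid.level_le (h : C.Valid u) : C.level u ≤ C.maxLevel := by
  cases hc : u.entry with
  | none => exact (level_of_entry_eq_none hc).trans_le (Nat.zero_le _)
  | some c =>
    rw [level_of_entry hc]
    exact add_le_add (Nat.mul_le_mul_left _ (rank_le_maxRank c)) h.revDepth_le

theorem finite_valid [Finite A] (C : Context σ A β) : {u : Kind σ A | C.Valid u}.Finite :=
  (Kind.finite_depth_le (C.revBound + C.maxLevel)).subset fun _ h =>
    h.depth_le.trans (Nat.add_le_add_left h.level_le _)

theorem Valid.level_lt_of_rank_le (h : C.Valid u) {p : σ.Pos} (hp : C.Occupies u p) {r : ℕ}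
    (hr : C.rank p ≤ r) (h_irrev : ∀ c, u.entry = some c → C.Incl p c → C.rank p ≠ r) :
    C.level u < (C.revBound + 1) * r := by
  have h_pos := C.rank_pos p
  cases hc : u.entry with
  | none =>
    rw [level_of_entry_eq_none hc]
    exact Nat.mul_pos (Nat.succ_pos _) (by omega)
  | some c =>
    have h_incl := (occupies_iff_of_entry hc).1 hp
    have h_rank := C.rank_le_of_incl h_incl
    have h_lt : C.rank c < r := by
      refine lt_of_le_of_ne (h_rank.trans hr) fun h_eq => ?_
      exact h_irrev c hc (C.incl_of_rank_eq h_incl (by omega)) (by omega)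
    have h_mul : (C.revBound + 1) * (C.rank c + 1) ≤ (C.revBound + 1) * r :=
      Nat.mul_le_mul_left _ h_lt
    rw [level_of_entry hc]
    have := h.revDepth_le
    rw [mul_add] at h_mul
    omega

theorem Valid.level_lt_generic (h : C.Valid u) {p : σ.Pos} (hp : C.Occupies u p) {r : ℕ}
    (hr : C.rank p ≤ r) (h_irrev : ∀ x, u = .generic x → C.Incl p x → C.rank p ≠ r) :
    C.level u < (C.revBound + 1) * r + C.revBound := by
  rcases h.revDepth_lt with h_lt | ⟨x, rfl⟩
  · cases hc : u.entry with
    | none =>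
      rw [level_of_entry_eq_none hc]
      exact Nat.add_pos_right _ (Nat.succ_pos _)
    | some c =>
      rw [level_of_entry hc]
      exact add_lt_add_of_le_of_lt (Nat.mul_le_mul_left _
        ((C.rank_le_of_incl ((occupies_iff_of_entry hc).1 hp)).trans hr)) h_lt
  · refine (h.level_lt_of_rank_le hp hr fun c hc => ?_).trans_le (Nat.le_add_right _ _)
    obtain rfl : x = c := Option.some_inj.1 hc
    exact h_irrev x rfl

theorem Valid.level_lt_child (h : C.Valid u) {R : σ.Rel} {q r : Fin (σ.ar R)}
    (hq : C.Occupies u ⟨R, q⟩) (h_det : C.Det R r q) :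
    C.level u < C.level (.child u R q r) := by
  rw [level_of_entry (u := .child u R q r) rfl, revDepth]
  split_ifs with h_rev
  · obtain ⟨⟨c, hc, h_incl, -⟩, -, -⟩ := h_rev
    have h_mul := Nat.mul_le_mul_left (C.revBound + 1)
      ((C.rank_le_of_incl h_incl).trans (C.rank_le_of_det h_det))
    rw [level_of_entry hc]
    omega
  · exact h.level_lt_of_rank_le hq (C.rank_le_of_det h_det) fun c hc h_incl h_rank =>
      h_rev ⟨⟨c, hc, (occupies_iff_of_entry hc).1 hq, h_incl⟩, C.det_of_rank_eq h_det h_rank, h_det⟩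

theorem valid_generic_inclRep {p : σ.Pos} {m : β} (h : occursAt C.M p m) :
    C.Valid (.generic (C.inclRep p)) where
  depth_le := Nat.zero_le _
  revDepth_lt := Or.inr ⟨_, rfl⟩
  inclRep_eq := by rintro _ ⟨⟩; exact C.inclRep_inclRep _
  exists_sim := ⟨m, Sim.of_entry rfl (Nat.le_add_right _ 2)
    (C.occursAt_of_incl (C.incl_inclRep _) h)⟩

theorem valid_initial (a : A) : C.Valid (.initial a) where
  depth_le := Nat.zero_le _
  revDepth_lt := Or.inl (Nat.succ_pos _)
  inclRep_eq := nofun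
  exists_sim := ⟨_, Sim.initial C a _⟩

theorem Valid.componentKind (h : C.Valid u) {R : σ.Rel} {q : Fin (σ.ar R)}
    (hq : C.Occupies u ⟨R, q⟩) (r : Fin (σ.ar R)) : C.Valid (C.componentKind u R q r) := by
  obtain ⟨m, hm⟩ := h.exists_sim
  obtain ⟨t, ht, -, h_sim⟩ := hm.exists_fact_of_occupies hq
  replace h_sim := h_sim r
  have h_bound : 0 < C.revBound := Nat.succ_pos _
  unfold Context.componentKind at h_sim ⊢
  split_ifs at h_sim ⊢ with h_eq
  · exact h
  unfold childKind at h_sim ⊢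
  split_ifs at h_sim ⊢ with h_det h_rev
  · exact valid_generic_inclRep ⟨t, ht, rfl⟩
  · refine ⟨?_, Or.inl ?_, nofun, _, h_sim⟩
    · exact (Nat.succ_le_succ h.depth_le).trans
        (Nat.add_le_add_left (h.level_lt_child hq h_det) C.revBound)
    · rw [revDepth]
      split_ifs with h_rev'
      · exact not_le.1 fun h_le => h_rev ⟨h_rev', h_le⟩
      · exact h_bound
  · refine ⟨?_, Or.inl ?_, nofun, _, h_sim⟩
    · have := u.depth_truncate_le (C.revBound - 1)
      rw [Kind.depth]
      omega
    · rwa [revDepth, if_neg fun h_rev => h_det h_rev.2.2]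

theorem Valid.generic (h : C.Valid u) {R : σ.Rel} {j : Fin (σ.ar R)} (hj : C.Occupies u ⟨R, j⟩)
    (i : Fin (σ.ar R)) : C.Valid (.generic (C.inclRep ⟨R, i⟩)) := by
  obtain ⟨m, hm⟩ := h.exists_sim
  obtain ⟨t, ht, -⟩ := hm.occursAt hj
  exact valid_generic_inclRep ⟨t, ht, rfl⟩

end Context

/-! ### Labels -/

/-- Labels tell apart the facts created for the same reason. -/
abbrev Label (σ : Sig) (n : ℕ) : Type := σ.Pos → Fin (n + 1)

open scoped Classical in
/-- The first `N` labels, in some fixed enumeration. -/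
noncomputable def labels (σ : Sig) (n N : ℕ) : Finset (Label σ n) :=
  {v | (Fintype.equivFin (Label σ n) v : ℕ) < N}

section Labels

variable {n N N' : ℕ}

theorem labels_mono (h : N ≤ N') : labels σ n N ⊆ labels σ n N' :=
  Finset.monotone_filter_right _ fun _ _ hv => hv.trans_le h

theorem labels_zero : labels σ n 0 = ∅ :=
  Finset.filter_false_of_mem fun _ _ => Nat.not_lt_zero _

open scoped Classical in
theorem card_labels : (labels σ n N).card = min (Fintype.card (Label σ n)) N := by
  rw [← Fin.card_filter_val_lt]
  exact Finset.card_bijective _ (Fintype.equivFin _).bijective fun v => by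
    simp only [labels, Finset.mem_filter_univ]

namespace Dependencies

variable (D : Dependencies σ) {R : σ.Rel} {q i j : Fin (σ.ar R)}

/-- The coordinate `c` of a label is hidden at the position `i` of an `R`-fact that was created
for an element at the position `q`: the coordinate belongs to a position that determines `i` but
not `q`. -/
def Masked (R : σ.Rel) (q i : Fin (σ.ar R)) (c : σ.Pos) : Prop :=
  ∃ c', c = ⟨R, c'⟩ ∧ ¬ D.Det R c' q ∧ D.Det R c' i

open scoped Classical in
/-- The part of the label of a fact that is visible at the position `i`. Facts with the same
visible part at `i` share the element at `i`. -/
noncomputable def mask (R : σ.Rel) (q i : Fin (σ.ar R)) (v : Label σ n) : Label σ n :=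
  fun c => if D.Masked R q i c then 0 else v c

open scoped Classical in
/-- The visible parts at the position `i` of the first `N` labels. -/
noncomputable def maskedLabels (n N : ℕ) (R : σ.Rel) (q i : Fin (σ.ar R)) : Finset (Label σ n) :=
  (labels σ n N).image (D.mask R q i)

theorem card_maskedLabels_mono (h : N ≤ N') :
    (D.maskedLabels n N R q i).card ≤ (D.maskedLabels n N' R q i).card :=
  Finset.card_le_card (Finset.image_subset_image (labels_mono h))

theorem card_maskedLabels_le : (D.maskedLabels n N R q i).card ≤ N :=
  Finset.card_image_le.trans (card_labels.trans_le (min_le_right _ _))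

theorem maskedLabels_zero : D.maskedLabels n 0 R q i = ∅ := by
  rw [maskedLabels, labels_zero, Finset.image_empty]

variable {D}

theorem mask_eq_self (h : D.Det R i q) (v : Label σ n) : D.mask R q i v = v := by
  funext c
  refine if_neg ?_
  rintro ⟨c', -, h_not, h_det⟩
  exact h_not (D.det_trans h_det h)

open scoped Classical in
theorem card_maskedLabels_of_det (h : D.Det R i q) (hN : N ≤ Fintype.card (Label σ n)) :
    (D.maskedLabels n N R q i).card = N := by
  rw [maskedLabels, funext (mask_eq_self h), Finset.image_id', card_labels, min_eq_right hN]

theorem maskedLabels_congr (h : D.Det R i j) (h' : D.Det R j i) :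
    D.maskedLabels n N R q i = D.maskedLabels n N R q j := by
  have h_masked : D.Masked R q i = D.Masked R q j := funext fun c => propext
    ⟨fun ⟨c', hc, h_not, h_det⟩ => ⟨c', hc, h_not, D.det_trans h_det h⟩,
      fun ⟨c', hc, h_not, h_det⟩ => ⟨c', hc, h_not, D.det_trans h_det h'⟩⟩
  unfold maskedLabels mask
  rw [h_masked]

theorem card_maskedLabels_of_not_det (h : ¬ D.Det R i q) :
    (D.maskedLabels n N R q i).card ≤ (n + 1) ^ (Fintype.card σ.Pos - 1) := by
  classical
  have h_zero : ∀ w ∈ D.maskedLabels n N R q i, w ⟨R, i⟩ = 0 := by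
    intro w hw
    obtain ⟨v, -, rfl⟩ := Finset.mem_image.1 hw
    exact if_pos ⟨i, rfl, h, D.det_refl i⟩
  have h_card : Fintype.card ({c : σ.Pos // c ≠ ⟨R, i⟩} → Fin (n + 1)) =
      (n + 1) ^ (Fintype.card σ.Pos - 1) := by
    simp
  rw [← h_card, ← Finset.card_univ]
  refine Finset.card_le_card_of_injOn (fun w c => w c) (fun _ _ => Finset.mem_univ _) ?_
  intro w hw w' hw' h_eq
  funext c
  by_cases hc : c = ⟨R, i⟩
  · rw [hc, h_zero w hw, h_zero w' hw']
  · exact congrFun h_eq ⟨c, hc⟩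

end Dependencies

end Labels

/-! ### Counting elements and facts -/

theorem exists_fixpoint_le {L : Type*} [ConditionallyCompleteLattice L] [OrderBot L] {f : L → L}
    (hf : Monotone f) {b : L} (hb : f b ≤ b) : ∃ z ≤ b, f z = z := by
  have h_le : ∀ y, f y ≤ y → sInf {y | f y ≤ y} ≤ y := fun y hy =>
    csInf_le (OrderBot.bddBelow _) hy
  have h_map : f (sInf {y | f y ≤ y}) ≤ sInf {y | f y ≤ y} :=
    le_csInf ⟨b, hb⟩ fun y hy => (hf (h_le y hy)).trans hy
  exact ⟨_, h_le b hb, h_map.antisymm (h_le _ (hf h_map))⟩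

theorem sum_le_mul_of_card_le {ι : Type*} {s : Finset ι} {f : ι → ℕ} {m n : ℕ} (hm : s.card ≤ m)
    (h : ∀ i ∈ s, f i ≤ n) : ∑ i ∈ s, f i ≤ m * n :=
  (Finset.sum_le_card_nsmul s f n h).trans (Nat.mul_le_mul_right n hm)

/-- Indices of the numbers to be chosen: the number of elements of kind `u`, and the number of
facts created for the elements of kind `u` at the position `p`. -/
inductive CountIndex (σ : Sig) (A : Type)
  | elems (u : Kind σ A)
  | facts (u : Kind σ A) (p : σ.Pos)

namespace Context

variable {A : Type} [Fintype A] (C : Context σ A β)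

/-- The finite set of valid kinds. -/
noncomputable def kinds : Finset (Kind σ A) := C.finite_valid.toFinset

/-- A bound for the growth of the counts from one level to the next. -/
noncomputable def growth : ℕ :=
  1 + Fintype.card σ.Pos * (C.kinds.card + Fintype.card A + C.kinds.card * Fintype.card σ.Pos)

/-- Labels have coordinates `0, …, labelBound`. -/
noncomputable def labelBound : ℕ := C.growth ^ (C.maxLevel + 1)

/-- A bound for the number of visible labels when some coordinate is masked. -/
noncomputable def maskedBound : ℕ := (C.labelBound + 1) ^ (Fintype.card σ.Pos - 1)

/-- The pairs of a kind `u` and a position `q` such that facts created for elements of kind `u`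
at `q` may contribute elements at `p`. -/
noncomputable def sources (p : σ.Pos) : Finset (Kind σ A × Fin (σ.ar p.1)) :=
  C.kinds ×ˢ Finset.univ

/-- The source whose facts balance the number of slots at the position `p`. -/
noncomputable def balancingSource (p : σ.Pos) : Kind σ A × Fin (σ.ar p.1) :=
  (.generic (C.inclRep ⟨p.1, C.detRep p.1 p.2⟩), C.detRep p.1 p.2)

open scoped Classical in
/-- The number of initial elements at the position `p`. -/
noncomputable def initialCount (p : σ.Pos) : ℕ :=
  (Finset.univ.filter fun a => occursAt C.I₀ p a).card

section Counts

variable (Z : CountIndex σ A → ℕ)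

/-- The number of slots at the position `p` in the facts of the source `b`. A slot is an
occurrence at a position, up to sharing. -/
noncomputable def slotCount (p : σ.Pos) (b : Kind σ A × Fin (σ.ar p.1)) : ℕ :=
  (C.maskedLabels C.labelBound (Z (.facts b.1 ⟨p.1, b.2⟩)) p.1 b.2 p.2).card

open scoped Classical in
/-- The number of slots at the position `p` that are to be filled by an element of kind `u`. -/
noncomputable def slotsOfKind (p : σ.Pos) (u : Kind σ A) : ℕ :=
  ∑ b ∈ (C.sources p).filter (fun b => C.componentKind b.1 p.1 b.2 p.2 = u), C.slotCount Z p b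

open scoped Classical in
/-- The number of slots at `p` in initial facts or facts of sources other than the balancing
one. -/
noncomputable def supply (p : σ.Pos) : ℕ :=
  C.initialCount p + ∑ b ∈ (C.sources p).erase (C.balancingSource p), C.slotCount Z p b

open scoped Classical in
/-- The number of slots at `p` needed by the elements not of the generic kind of `p`. -/
noncomputable def demand (p : σ.Pos) : ℕ :=
  ∑ u ∈ C.kinds.filter (fun u => C.Occupies u p ∧ u ≠ .generic (C.inclRep p)), Z (.elems u)

open scoped Classical in
/-- The total demand and supply at the positions of rank `n`. -/
noncomputable def rankTotal (n : ℕ) : ℕ :=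
  ∑ p with C.rank p = n, (C.demand Z p + C.supply Z p)

open scoped Classical in
/-- The total demand and supply at the other positions of the same rank as `p`. -/
noncomputable def peerTotal (p : σ.Pos) : ℕ :=
  ∑ p' ∈ (Finset.univ.filter fun p' => C.rank p' = C.rank p).erase p,
    (C.demand Z p' + C.supply Z p')

open scoped Classical in
/-- The operator whose fixpoints are the balanced counts. At a position `p`, generic elements and
the balancing source make up for supply and demand respectively, and the summand `peerTotal`
makes both sides equal to `rankTotal`, which is the same for equivalent positions. -/
noncomputable def balance : CountIndex σ A → ℕ
  | .elems (.initial _) => 1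
  | .elems .unknown => 0
  | .elems (.generic x) => C.supply Z x + C.peerTotal Z x
  | .elems (.child u R q r) => C.slotsOfKind Z ⟨R, r⟩ (.child u R q r)
  | .facts u p =>
    if u ∈ C.kinds ∧ C.Spawns u p then
      if u = .generic (C.inclRep p) then C.demand Z p + C.peerTotal Z p else Z (.elems u)
    else 0

open scoped Classical in
/-- A bound for the counts in terms of the level. -/
noncomputable def levelBound : CountIndex σ A → ℕ
  | .elems u => C.growth ^ (C.level u + 1) * C.maskedBound
  | .facts u p =>
    if u ∈ C.kinds ∧ C.Spawns u p then C.growth ^ (C.level u + 1) * C.maskedBound else 0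

open scoped Classical in
/-- The number of occurrences at `p` in initial facts of the elements of kind `u`. -/
noncomputable def initialIndicator (p : σ.Pos) (u : Kind σ A) : ℕ :=
  if ∃ a, u = .initial a ∧ occursAt C.I₀ p a then 1 else 0

end Counts

/-- Counts for which the elements of each kind can be distributed bijectively to the slots at
each position that the kind occupies. -/
structure IsBalanced (Z : CountIndex σ A → ℕ) : Prop where
  facts_eq_zero : ∀ {u p}, ¬ (u ∈ C.kinds ∧ C.Spawns u p) → Z (.facts u p) = 0
  elems_initial : ∀ a, Z (.elems (.initial a)) = 1
  slotsOfKind_add_initialIndicator : ∀ {u p}, u ∈ C.kinds → C.Occupies u p →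
    C.slotsOfKind Z p u + C.initialIndicator p u = Z (.elems u)

variable {C} {u : Kind σ A} {p : σ.Pos} {Z : CountIndex σ A → ℕ}

theorem mem_kinds : u ∈ C.kinds ↔ C.Valid u := Set.Finite.mem_toFinset _

theorem mem_sources {b : Kind σ A × Fin (σ.ar p.1)} : b ∈ C.sources p ↔ C.Valid b.1 := by
  simp [sources, mem_kinds]

theorem card_sources_le : (C.sources p).card ≤ C.kinds.card * Fintype.card σ.Pos := by
  rw [sources, Finset.card_product, Finset.card_univ]
  exact Nat.mul_le_mul_left _ (Fintype.card_le_of_injective (fun i => (⟨p.1, i⟩ : σ.Pos))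
    fun _ _ h => eq_of_heq (Sigma.mk.inj h).2)

theorem demand_add_supply_add_peerTotal (p : σ.Pos) :
    C.demand Z p + C.supply Z p + C.peerTotal Z p = C.rankTotal Z (C.rank p) := by
  classical
  exact Finset.add_sum_erase _ (fun p' => C.demand Z p' + C.supply Z p')
    ((Finset.mem_filter_univ _).2 rfl)

theorem balance_monotone : Monotone C.balance := by
  intro Z Z' h
  have h_slots : ∀ p b, C.slotCount Z p b ≤ C.slotCount Z' p b := fun p b =>
    C.card_maskedLabels_mono (h _)
  have h_supply : ∀ p, C.supply Z p ≤ C.supply Z' p := fun p =>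
    Nat.add_le_add_left (Finset.sum_le_sum fun b _ => h_slots p b) _
  have h_demand : ∀ p, C.demand Z p ≤ C.demand Z' p := fun p => Finset.sum_le_sum fun b _ => h _
  have h_peer : ∀ p, C.peerTotal Z p ≤ C.peerTotal Z' p := fun p =>
    Finset.sum_le_sum fun _ _ => add_le_add (h_demand _) (h_supply _)
  rintro ((a | _ | x | ⟨u, R, q, r⟩) | ⟨u, p⟩)
  · exact le_rfl
  · exact le_rfl
  · exact add_le_add (h_supply x) (h_peer x)
  · exact Finset.sum_le_sum fun b _ => h_slots _ b
  · simp only [balance]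
    split_ifs
    · exact add_le_add (h_demand p) (h_peer p)
    · exact h _
    · exact le_rfl

section LevelBound

theorem growth_pos : 0 < C.growth := Nat.add_pos_left Nat.one_pos _

theorem maskedBound_pos : 0 < C.maskedBound := Nat.pow_pos (Nat.succ_pos _)

theorem growth_pow_mul_le {l l' : ℕ} (h : l ≤ l') :
    C.growth ^ l * C.maskedBound ≤ C.growth ^ l' * C.maskedBound :=
  Nat.mul_le_mul_right _ (Nat.pow_le_pow_right growth_pos h)

theorem growth_pow_mul_pos (l : ℕ) : 0 < C.growth ^ l * C.maskedBound :=
  Nat.mul_pos (Nat.pow_pos growth_pos) maskedBound_pos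

theorem slotCount_levelBound_le {b : Kind σ A × Fin (σ.ar p.1)} {l : ℕ}
    (h : C.Spawns b.1 ⟨p.1, b.2⟩ → C.Det p.1 p.2 b.2 → C.level b.1 < l) :
    C.slotCount C.levelBound p b ≤ C.growth ^ l * C.maskedBound := by
  rw [slotCount, levelBound]
  split_ifs with h_spawns
  · by_cases h_det : C.Det p.1 p.2 b.2
    · exact C.card_maskedLabels_le.trans (growth_pow_mul_le (h h_spawns.2 h_det))
    · exact (Dependencies.card_maskedLabels_of_not_det h_det).trans
        (Nat.le_mul_of_pos_left _ (Nat.pow_pos growth_pos))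
  · rw [Dependencies.maskedLabels_zero, Finset.card_empty]
    exact Nat.zero_le _

theorem supply_levelBound_le (p : σ.Pos) :
    C.supply C.levelBound p ≤ (Fintype.card A + C.kinds.card * Fintype.card σ.Pos) *
      (C.growth ^ ((C.revBound + 1) * C.rank p + C.revBound) * C.maskedBound) := by
  classical
  rw [add_mul]
  refine add_le_add ((Finset.card_le_univ _).trans
    (Nat.le_mul_of_pos_right _ (growth_pow_mul_pos _))) ?_
  refine sum_le_mul_of_card_le (Finset.card_erase_le.trans card_sources_le) fun b hb => ?_
  obtain ⟨h_ne, h_valid⟩ := Finset.mem_erase.1 hb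
  rw [mem_sources] at h_valid
  refine slotCount_levelBound_le fun h_spawns h_det => ?_
  refine h_valid.level_lt_generic h_spawns.occupies (C.rank_le_of_det h_det) ?_
  intro x hx h_incl h_rank
  rw [hx] at h_spawns
  have h_rep : b.2 = C.detRep p.1 b.2 := h_spawns.2 h_incl
  have h_rep' : C.detRep p.1 p.2 = b.2 :=
    (C.detRep_eq h_det (C.det_of_rank_eq h_det h_rank)).trans h_rep.symm
  refine h_ne ?_
  rw [balancingSource, h_rep', C.inclRep_eq h_incl h_spawns.1, h_valid.inclRep_eq x hx, ← hx]

theorem demand_levelBound_le (p : σ.Pos) :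
    C.demand C.levelBound p ≤ C.kinds.card *
      (C.growth ^ ((C.revBound + 1) * C.rank p + C.revBound) * C.maskedBound) := by
  classical
  refine sum_le_mul_of_card_le (Finset.card_filter_le _ _) fun u hu => ?_
  obtain ⟨h_mem, h_occ, h_ne⟩ := Finset.mem_filter.1 hu
  have h_valid := mem_kinds.1 h_mem
  refine growth_pow_mul_le (h_valid.level_lt_generic h_occ le_rfl ?_)
  rintro x rfl h_incl -
  exact h_ne (by rw [C.inclRep_eq h_incl h_occ, h_valid.inclRep_eq x rfl])

theorem rankTotal_levelBound_le (p : σ.Pos) :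
    C.rankTotal C.levelBound (C.rank p) ≤
      C.growth ^ ((C.revBound + 1) * C.rank p + C.revBound + 1) * C.maskedBound := by
  set B := C.growth ^ ((C.revBound + 1) * C.rank p + C.revBound) * C.maskedBound with hB
  calc C.rankTotal C.levelBound (C.rank p)
      ≤ Fintype.card σ.Pos *
          ((C.kinds.card + (Fintype.card A + C.kinds.card * Fintype.card σ.Pos)) * B) := by
        refine sum_le_mul_of_card_le (Finset.card_le_univ _) fun p' hp' => ?_
        rw [add_mul, hB, ← (Finset.mem_filter_univ _).1 hp']
        exact add_le_add (demand_levelBound_le p') (supply_levelBound_le p')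
    _ ≤ C.growth * B := by
        rw [← mul_assoc, ← add_assoc]
        exact Nat.mul_le_mul_right B (Nat.le_add_left _ 1)
    _ = _ := by rw [hB, pow_succ', mul_assoc]

theorem slotsOfKind_levelBound_le {R : σ.Rel} {q r : Fin (σ.ar R)} :
    C.slotsOfKind C.levelBound ⟨R, r⟩ (.child u R q r) ≤
      C.levelBound (.elems (.child u R q r)) := by
  classical
  set B := C.growth ^ C.level (.child u R q r) * C.maskedBound with hB
  calc C.slotsOfKind C.levelBound ⟨R, r⟩ (.child u R q r)
      ≤ C.kinds.card * Fintype.card σ.Pos * B := by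
        refine sum_le_mul_of_card_le ((Finset.card_filter_le _ _).trans card_sources_le) ?_
        rintro ⟨u', q'⟩ hb
        obtain ⟨h_mem, h_kind⟩ := Finset.mem_filter.1 hb
        refine slotCount_levelBound_le fun h_spawns h_det => ?_
        dsimp only at h_kind h_spawns h_det
        unfold componentKind at h_kind
        split_ifs at h_kind with h_eq
        · rw [h_kind] at h_spawns
          exact (h_spawns.2 (by rw [h_eq])).elim
        · rw [childKind, if_pos h_det] at h_kind
          split_ifs at h_kind
          rw [← h_kind]
          exact (mem_sources.1 h_mem).level_lt_child h_spawns.occupies h_det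
    _ ≤ C.growth * B := by
        refine Nat.mul_le_mul_right B ?_
        have h_pos : 0 < Fintype.card σ.Pos := Fintype.card_pos_iff.2 ⟨⟨R, r⟩⟩
        exact ((Nat.le_add_left _ _).trans (Nat.le_mul_of_pos_left _ h_pos)).trans
          (Nat.le_add_left _ 1)
    _ = _ := by rw [hB, levelBound, pow_succ', mul_assoc]

theorem balance_levelBound_le : C.balance C.levelBound ≤ C.levelBound := by
  rintro ((a | _ | x | ⟨u, R, q, r⟩) | ⟨u, p⟩)
  · exact growth_pow_mul_pos _
  · exact Nat.zero_le _
  · have h_total := demand_add_supply_add_peerTotal (C := C) (Z := C.levelBound) x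
    have h_bound := rankTotal_levelBound_le (C := C) x
    simp only [balance, levelBound, level_of_entry (u := .generic x) rfl, revDepth]
    omega
  · exact slotsOfKind_levelBound_le
  · simp only [balance, levelBound]
    split_ifs with h h_eq
    · have h_total := demand_add_supply_add_peerTotal (C := C) (Z := C.levelBound) p
      have h_bound := rankTotal_levelBound_le (C := C) p
      rw [h_eq, level_of_entry (c := C.inclRep p) rfl, revDepth, C.rank_inclRep]
      omega
    · exact le_rfl
    · exact le_rfl

open scoped Classical in
theorem levelBound_facts_le_card :
    C.levelBound (.facts u p) ≤ Fintype.card (Label σ C.labelBound) := by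
  have h_pos : 0 < Fintype.card σ.Pos := Fintype.card_pos_iff.2 ⟨p⟩
  have h_card : Fintype.card (Label σ C.labelBound) = (C.labelBound + 1) * C.maskedBound := by
    rw [maskedBound, ← pow_succ', Nat.sub_add_cancel h_pos, Fintype.card_fun, Fintype.card_fin]
  rw [h_card, levelBound]
  split_ifs with h
  · exact Nat.mul_le_mul_right _ <| Nat.le_succ_of_le <|
      Nat.pow_le_pow_right growth_pos (Nat.succ_le_succ (mem_kinds.1 h.1).level_le)
  · exact Nat.zero_le _

end LevelBound

section Initial

theorem initialIndicator_eq_zero (h : ∀ a, u = .initial a → ¬ occursAt C.I₀ p a) :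
    C.initialIndicator p u = 0 :=
  if_neg fun ⟨a, hu, ha⟩ => h a hu ha

theorem initialCount_le_of_det {R : σ.Rel} {i j : Fin (σ.ar R)} (h : C.Det R j i) :
    C.initialCount ⟨R, i⟩ ≤ C.initialCount ⟨R, j⟩ := by
  classical
  have h_fact : ∀ a, occursAt C.I₀ ⟨R, i⟩ a →
      ∃ b, ∃ t, (⟨R, t⟩ : Fact σ A) ∈ C.I₀ ∧ t i = a ∧ t j = b := by
    rintro a ⟨t, ht, rfl⟩
    exact ⟨_, t, ht, rfl, rfl⟩
  choose! f hf using h_fact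
  simp only [initialCount]
  refine Finset.card_le_card_of_injOn f ?_ ?_
  · intro a ha
    obtain ⟨t, ht, -, h_eq⟩ := hf a ((Finset.mem_filter_univ _).1 ha)
    exact (Finset.mem_filter_univ _).2 ⟨t, ht, h_eq⟩
  · intro a ha b hb h_eq
    obtain ⟨t, ht, rfl, htj⟩ := hf a ((Finset.mem_filter_univ _).1 ha)
    obtain ⟨t', ht', rfl, htj'⟩ := hf b ((Finset.mem_filter_univ _).1 hb)
    exact C.eq_of_det h ht ht' (by rw [htj, htj', h_eq])

open scoped Classical in
theorem sum_initialIndicator (p x : σ.Pos) :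
    ∑ u ∈ C.kinds.erase (.generic x), C.initialIndicator p u = C.initialCount p := by
  simp only [initialIndicator, initialCount]
  rw [← Finset.card_filter]
  symm
  refine Finset.card_bij (fun a _ => .initial a) ?_ ?_ ?_
  · intro a ha
    exact Finset.mem_filter.2 ⟨Finset.mem_erase.2 ⟨nofun, mem_kinds.2 (valid_initial a)⟩,
      a, rfl, (Finset.mem_filter_univ _).1 ha⟩
  · intro a _ b _ h
    exact Kind.initial.inj h
  · intro u hu
    obtain ⟨-, a, rfl, ha⟩ := Finset.mem_filter.1 hu
    exact ⟨a, (Finset.mem_filter_univ _).2 ha, rfl⟩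

end Initial

section Fixpoint

theorem facts_eq_zero (hZ : C.balance Z = Z) (h : ¬ (u ∈ C.kinds ∧ C.Spawns u p)) :
    Z (.facts u p) = 0 := by
  rw [← hZ]
  exact if_neg h

theorem facts_eq_elems (hZ : C.balance Z = Z) (hu : u ∈ C.kinds) (h : C.Spawns u p)
    (h_generic : u ≠ .generic (C.inclRep p)) : Z (.facts u p) = Z (.elems u) := by
  conv_lhs => rw [← hZ, balance, if_pos ⟨hu, h⟩, if_neg h_generic]

theorem facts_generic (hZ : C.balance Z = Z) (hu : .generic (C.inclRep p) ∈ C.kinds)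
    (h : C.Spawns (.generic (C.inclRep p)) p) :
    Z (.facts (.generic (C.inclRep p)) p) = C.demand Z p + C.peerTotal Z p := by
  conv_lhs => rw [← hZ, balance, if_pos ⟨hu, h⟩, if_pos rfl]

theorem slotCount_eq_zero (hZ : C.balance Z = Z) {b : Kind σ A × Fin (σ.ar p.1)}
    (h : ¬ C.Spawns b.1 ⟨p.1, b.2⟩) : C.slotCount Z p b = 0 := by
  rw [slotCount, facts_eq_zero hZ fun h' => h h'.2, Dependencies.maskedLabels_zero,
    Finset.card_empty]

theorem slotCount_eq_facts (hZ_le : Z ≤ C.levelBound) {b : Kind σ A × Fin (σ.ar p.1)}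
    (h : C.Det p.1 p.2 b.2) : C.slotCount Z p b = Z (.facts b.1 ⟨p.1, b.2⟩) :=
  Dependencies.card_maskedLabels_of_det h ((hZ_le _).trans levelBound_facts_le_card)

theorem slotsOfKind_eq_facts (hZ_le : Z ≤ C.levelBound) (hu : u ∈ C.kinds)
    (h_generic : u ≠ .generic (C.inclRep p))
    (h_child : ∀ u' q, u ≠ .child u' p.1 q p.2) : C.slotsOfKind Z p u = Z (.facts u p) := by
  classical
  calc C.slotsOfKind Z p u = C.slotCount Z p (u, p.2) := by
        refine Finset.sum_eq_single_of_mem _ ?_ fun b hb h_ne => ?_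
        · exact Finset.mem_filter.2 ⟨mem_sources.2 (mem_kinds.1 hu), if_pos rfl⟩
        · exact (h_ne (eq_of_componentKind_eq (Finset.mem_filter.1 hb).2 h_generic h_child)).elim
    _ = Z (.facts u p) := slotCount_eq_facts hZ_le (C.det_refl _)

theorem balanced_of_ne_generic (hZ : C.balance Z = Z) (hZ_le : Z ≤ C.levelBound)
    (hu : u ∈ C.kinds) (hp : C.Occupies u p) (h_generic : u ≠ .generic (C.inclRep p)) :
    C.slotsOfKind Z p u + C.initialIndicator p u = Z (.elems u) := by
  by_cases h_child : ∃ u' q, u = .child u' p.1 q p.2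
  · obtain ⟨u', q, rfl⟩ := h_child
    rw [initialIndicator_eq_zero nofun, add_zero]
    conv_rhs => rw [← hZ, balance]
  push Not at h_child
  rw [slotsOfKind_eq_facts hZ_le hu h_generic h_child]
  by_cases h_init : ∃ a, u = .initial a ∧ occursAt C.I₀ p a
  · rw [initialIndicator, if_pos h_init]
    obtain ⟨a, rfl, ha⟩ := h_init
    have h_not : ¬ C.Spawns (.initial a) p := fun h => h.2 ha
    rw [facts_eq_zero hZ fun h => h_not h.2, ← hZ, balance]
  have h_spawns : C.Spawns u p := by
    cases u with
    | initial a => exact ⟨hp, fun ha => h_init ⟨a, rfl, ha⟩⟩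
    | unknown => exact hp
    | generic x =>
      refine ⟨hp, fun h => (h_generic ?_).elim⟩
      rw [C.inclRep_eq h hp, (mem_kinds.1 hu).inclRep_eq x rfl]
    | child u' R q r => exact ⟨hp, fun h => by subst h; exact h_child u' q rfl⟩
  rw [initialIndicator, if_neg h_init, facts_eq_elems hZ hu h_spawns h_generic, add_zero]

theorem slotsOfKind_eq_zero (hZ : C.balance Z = Z) (h : ¬ C.Occupies u p) :
    C.slotsOfKind Z p u = 0 := by
  classical
  refine Finset.sum_eq_zero fun b hb => slotCount_eq_zero hZ fun h_spawns => h ?_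
  rw [← (Finset.mem_filter.1 hb).2]
  exact h_spawns.occupies.componentKind p.2

theorem sum_slotsOfKind (hZ : C.balance Z = Z) (p : σ.Pos) :
    ∑ u ∈ C.kinds, C.slotsOfKind Z p u = ∑ b ∈ C.sources p, C.slotCount Z p b := by
  classical
  simp only [slotsOfKind, Finset.sum_filter]
  rw [Finset.sum_comm]
  refine Finset.sum_congr rfl fun b hb => ?_
  by_cases h : C.Spawns b.1 ⟨p.1, b.2⟩
  · rw [Finset.sum_ite_eq, if_pos]
    exact mem_kinds.2 ((mem_sources.1 hb).componentKind h.occupies _)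
  · simp only [slotCount_eq_zero hZ h, ite_self, Finset.sum_const_zero]

open scoped Classical in
theorem sum_slotsOfKind_erase_generic (hZ : C.balance Z = Z) (hZ_le : Z ≤ C.levelBound)
    (p : σ.Pos) :
    ∑ u ∈ C.kinds.erase (.generic (C.inclRep p)), C.slotsOfKind Z p u + C.initialCount p =
      C.demand Z p := by
  have h_filter : C.kinds.filter (fun u => C.Occupies u p ∧ u ≠ .generic (C.inclRep p)) =
      (C.kinds.erase (.generic (C.inclRep p))).filter (C.Occupies · p) := by
    ext u
    simp only [Finset.mem_filter, Finset.mem_erase]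
    tauto
  rw [← sum_initialIndicator p (C.inclRep p), ← Finset.sum_add_distrib, demand, h_filter,
    Finset.sum_filter]
  refine Finset.sum_congr rfl fun u hu => ?_
  obtain ⟨h_ne, hu⟩ := Finset.mem_erase.1 hu
  split_ifs with h
  · exact balanced_of_ne_generic hZ hZ_le hu h h_ne
  · have h_init : ∀ a, u = .initial a → ¬ occursAt C.I₀ p a := by
      rintro a rfl ha
      exact h ⟨p, ha, C.incl_refl p⟩
    rw [slotsOfKind_eq_zero hZ h, initialIndicator_eq_zero h_init, add_zero]

theorem slotCount_balancingSource (hZ : C.balance Z = Z) (hZ_le : Z ≤ C.levelBound)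
    (h : C.balancingSource p ∈ C.sources p) :
    C.slotCount Z p (C.balancingSource p) =
      C.demand Z ⟨p.1, C.detRep p.1 p.2⟩ + C.peerTotal Z ⟨p.1, C.detRep p.1 p.2⟩ := by
  rw [slotCount_eq_facts hZ_le (C.det_detRep _)]
  exact facts_generic hZ (mem_kinds.2 (mem_sources.1 h))
    ⟨C.inclRep_incl _, fun _ => (C.detRep_detRep _).symm⟩

theorem supply_detRep (p : σ.Pos) : C.supply Z ⟨p.1, C.detRep p.1 p.2⟩ = C.supply Z p := by
  have h_source : C.balancingSource ⟨p.1, C.detRep p.1 p.2⟩ = C.balancingSource p := by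
    simp only [balancingSource, C.detRep_detRep]
  have h_initial : C.initialCount ⟨p.1, C.detRep p.1 p.2⟩ = C.initialCount p :=
    (initialCount_le_of_det (C.det_detRep _)).antisymm (initialCount_le_of_det (C.detRep_det _))
  rw [supply, supply, h_initial, h_source]
  refine congrArg _ (Finset.sum_congr rfl fun b _ => ?_)
  rw [slotCount, slotCount, Dependencies.maskedLabels_congr (C.detRep_det _) (C.det_detRep _)]

theorem demand_inclRep (p : σ.Pos) : C.demand Z (C.inclRep p) = C.demand Z p := by
  classical
  rw [demand, demand, C.inclRep_inclRep]
  refine Finset.sum_congr (Finset.filter_congr fun u _ => and_congr_left fun _ => ?_) fun _ _ => rfl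
  exact ⟨fun h => h.trans_incl (C.inclRep_incl _), fun h => h.trans_incl (C.incl_inclRep _)⟩

theorem balanced_generic (hZ : C.balance Z = Z) (hZ_le : Z ≤ C.levelBound)
    (hu : .generic (C.inclRep p) ∈ C.kinds) :
    C.slotsOfKind Z p (.generic (C.inclRep p)) = Z (.elems (.generic (C.inclRep p))) := by
  classical
  have h_mem : C.balancingSource p ∈ C.sources p :=
    mem_sources.2 ((mem_kinds.1 hu).generic (C.inclRep_incl p) _)
  have h_slots := sum_slotsOfKind hZ p
  rw [← Finset.add_sum_erase _ _ hu, ← Finset.add_sum_erase _ _ h_mem,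
    slotCount_balancingSource hZ hZ_le h_mem] at h_slots
  have h_demand := sum_slotsOfKind_erase_generic hZ hZ_le p
  have h_supply : C.supply Z p = C.initialCount p +
    ∑ b ∈ (C.sources p).erase (C.balancingSource p), C.slotCount Z p b := rfl
  have h_detRep := demand_add_supply_add_peerTotal (C := C) (Z := Z) ⟨p.1, C.detRep p.1 p.2⟩
  have h_inclRep := demand_add_supply_add_peerTotal (C := C) (Z := Z) (C.inclRep p)
  rw [supply_detRep, show C.rank ⟨p.1, _⟩ = C.rank p from C.rank_detRep p.2] at h_detRep
  rw [demand_inclRep, C.rank_inclRep] at h_inclRep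
  have h_elems : Z (.elems (.generic (C.inclRep p))) =
      C.supply Z (C.inclRep p) + C.peerTotal Z (C.inclRep p) := by
    conv_lhs => rw [← hZ, balance]
  omega

theorem exists_isBalanced (C : Context σ A β) : ∃ Z, C.IsBalanced Z := by
  obtain ⟨Z, hZ_le, hZ⟩ := exists_fixpoint_le C.balance_monotone C.balance_levelBound_le
  refine ⟨Z, facts_eq_zero hZ, fun a => by rw [← hZ, balance], fun {u p} hu hp => ?_⟩
  by_cases h_generic : u = .generic (C.inclRep p)
  · subst h_generic
    rw [initialIndicator_eq_zero nofun, add_zero, balanced_generic hZ hZ_le hu]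
  · exact balanced_of_ne_generic hZ hZ_le hu hp h_generic

end Fixpoint

end Context

/-! ### Gluing slots to elements -/

namespace Dependencies

variable {D : Dependencies σ} {R : σ.Rel} {q : Fin (σ.ar R)} {n : ℕ} {v w : Label σ n}

theorem mask_eq_mask {L : Set (Fin (σ.ar R))} {r : Fin (σ.ar R)} (hL : L.Nonempty)
    (h_det : ∀ c, (∀ l ∈ L, D.Det R c l) → D.Det R c r)
    (h : ∀ l ∈ L, D.mask R q l v = D.mask R q l w) : D.mask R q r v = D.mask R q r w := by
  funext c
  simp only [mask]
  split_ifs with h_masked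
  · rfl
  obtain ⟨l, hl, h_visible⟩ : ∃ l ∈ L, ¬ D.Masked R q l c := by
    by_contra! h_all
    obtain ⟨l, hl⟩ := hL
    obtain ⟨c', rfl, h_not, -⟩ := h_all l hl
    refine h_masked ⟨c', rfl, h_not, h_det c' fun l' hl' => ?_⟩
    obtain ⟨_, ⟨⟩, -, h_det'⟩ := h_all l' hl'
    exact h_det'
  have h_eq := congrFun (h l hl) c
  simpa only [mask, if_neg h_visible] using h_eq

end Dependencies

namespace Context

section Slots

variable {A : Type} [Fintype A] (C : Context σ A β) (Z : CountIndex σ A → ℕ)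

/-- The created slots at the position `p`: a source, given by a kind and a position, together with
the visible part of a label. -/
noncomputable def slots (p : σ.Pos) :
    Finset (Σ _ : Kind σ A × Fin (σ.ar p.1), Label σ C.labelBound) :=
  (C.sources p).sigma fun b =>
    C.maskedLabels C.labelBound (Z (.facts b.1 ⟨p.1, b.2⟩)) p.1 b.2 p.2

variable {Z} in
/-- The kind of the element that fills a created slot. -/
noncomputable def slotKind {p : σ.Pos} (z : C.slots Z p) : Kind σ A :=
  C.componentKind z.1.1.1 p.1 z.1.1.2 p.2

open scoped Classical in
/-- The slots at the position `p` that are to be filled by elements of kind `u`. -/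
noncomputable def kindSlots (p : σ.Pos) (u : Kind σ A) : Finset (C.slots Z p) :=
  Finset.univ.filter fun z => C.slotKind z = u

variable {C Z} in
theorem mem_kindSlots {p : σ.Pos} {u : Kind σ A} {z : C.slots Z p} :
    z ∈ C.kindSlots Z p u ↔ C.slotKind z = u := by
  simp only [kindSlots, Finset.mem_filter, Finset.mem_univ, true_and]

theorem card_kindSlots (p : σ.Pos) (u : Kind σ A) :
    (C.kindSlots Z p u).card = C.slotsOfKind Z p u := by
  classical
  have h_sigma : (C.kindSlots Z p u).map (Function.Embedding.subtype _) =
      ((C.sources p).filter fun b => C.componentKind b.1 p.1 b.2 p.2 = u).sigma fun b =>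
        C.maskedLabels C.labelBound (Z (.facts b.1 ⟨p.1, b.2⟩)) p.1 b.2 p.2 := by
    ext z
    constructor
    · intro h
      obtain ⟨⟨z, hz⟩, h_kind, rfl⟩ := Finset.mem_map.1 h
      obtain ⟨h_source, h_label⟩ := Finset.mem_sigma.1 hz
      exact Finset.mem_sigma.2
        ⟨Finset.mem_filter.2 ⟨h_source, mem_kindSlots.1 h_kind⟩, h_label⟩
    · intro h
      obtain ⟨h_source, h_label⟩ := Finset.mem_sigma.1 h
      obtain ⟨h_source, h_kind⟩ := Finset.mem_filter.1 h_source
      exact Finset.mem_map.2 ⟨⟨z, Finset.mem_sigma.2 ⟨h_source, h_label⟩⟩,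
        mem_kindSlots.2 h_kind, rfl⟩
  rw [← Finset.card_map (Function.Embedding.subtype _), h_sigma, Finset.card_sigma]
  rfl

theorem exists_bijOn_kindSlots (p : σ.Pos) (u : Kind σ A) :
    ∃ f : C.slots Z p → ℕ, Set.BijOn f (C.kindSlots Z p u) (Set.Iio (C.slotsOfKind Z p u)) := by
  refine (Finset.finite_toSet _).exists_bijOn_of_encard_eq ?_
  rw [Set.encard_coe_eq_coe_finsetCard, card_kindSlots, ← Finset.coe_Iio,
    Set.encard_coe_eq_coe_finsetCard, Nat.card_Iio]

/-- A numbering of the slots at the position `p` that are to be filled by elements of kind `u`. -/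
noncomputable def slotNumber (p : σ.Pos) (u : Kind σ A) : C.slots Z p → ℕ :=
  (C.exists_bijOn_kindSlots Z p u).choose

theorem bijOn_slotNumber (p : σ.Pos) (u : Kind σ A) :
    Set.BijOn (C.slotNumber Z p u) (C.kindSlots Z p u) (Set.Iio (C.slotsOfKind Z p u)) :=
  (C.exists_bijOn_kindSlots Z p u).choose_spec

/-- The slots: one for each initial element, and the created ones. -/
abbrev Slot : Type := A ⊕ Σ p : σ.Pos, C.slots Z p

/-- The element that fills a slot, given by its kind and a number. -/
noncomputable def slotElt : C.Slot Z → Kind σ A × ℕ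
  | .inl a => (.initial a, 0)
  | .inr ⟨p, z⟩ => (C.slotKind z, C.slotNumber Z p (C.slotKind z) z)

/-- The initial slots form one bag, and the created ones have one bag for each source. -/
def slotBag : C.Slot Z → Option (Kind σ A × σ.Pos)
  | .inl _ => none
  | .inr ⟨p, z⟩ => some (z.1.1.1, ⟨p.1, z.1.1.2⟩)

/-- A created `R`-fact: it is created for elements of the given kind at the position `pos`. -/
structure NewFact (R : σ.Rel) where
  kind : Kind σ A
  kind_mem : kind ∈ C.kinds
  pos : Fin (σ.ar R)
  label : Label σ C.labelBound
  label_mem : label ∈ labels σ C.labelBound (Z (.facts kind ⟨R, pos⟩))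

variable {C Z}

/-- The slot at the position `i` of a created fact. -/
noncomputable def NewFact.slot {R : σ.Rel} (F : C.NewFact Z R) (i : Fin (σ.ar R)) : C.Slot Z :=
  .inr ⟨⟨R, i⟩, ⟨(F.kind, F.pos), C.mask R F.pos i F.label⟩, Finset.mem_sigma.2
    ⟨mem_sources.2 (mem_kinds.1 F.kind_mem), Finset.mem_image_of_mem _ F.label_mem⟩⟩

variable (C Z) in
/-- The facts over slots: the initial ones and the created ones. -/
def slotFacts : Inst σ (C.Slot Z) :=
  mapInst Sum.inl C.I₀ ∪ {G | ∃ F : C.NewFact Z G.1, G.2 = F.slot}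

variable {p p' : σ.Pos} {R : σ.Rel} {u : Kind σ A} {s s' : C.Slot Z}

theorem mem_slotFacts {t : Fin (σ.ar R) → C.Slot Z} :
    (⟨R, t⟩ : Fact σ (C.Slot Z)) ∈ C.slotFacts Z ↔
      (∃ t₀, (⟨R, t₀⟩ : Fact σ A) ∈ C.I₀ ∧ t = fun i => .inl (t₀ i)) ∨
        ∃ F : C.NewFact Z R, t = F.slot :=
  or_congr mem_mapInst Iff.rfl

theorem exists_slot_eq (z : C.slots Z p) : ∃ F : C.NewFact Z p.1, F.slot p.2 = .inr ⟨p, z⟩ := by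
  obtain ⟨⟨⟨u, q⟩, w⟩, hz⟩ := z
  obtain ⟨hb, hw⟩ := Finset.mem_sigma.1 hz
  dsimp only at hb hw
  obtain ⟨v, hv, rfl⟩ := Finset.mem_image.1 hw
  exact ⟨⟨u, mem_kinds.2 (mem_sources.1 hb), q, v, hv⟩, rfl⟩

theorem occursAt_slotFacts_iff : occursAt (C.slotFacts Z) p s ↔
    (∃ a, s = .inl a ∧ occursAt C.I₀ p a) ∨ ∃ z, s = .inr ⟨p, z⟩ := by
  constructor
  · rintro ⟨t, ht, rfl⟩
    obtain ⟨t₀, ht₀, rfl⟩ | ⟨F, rfl⟩ := mem_slotFacts.1 ht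
    · exact Or.inl ⟨_, rfl, t₀, ht₀, rfl⟩
    · exact Or.inr ⟨_, rfl⟩
  · rintro (⟨a, rfl, t, ht, rfl⟩ | ⟨z, rfl⟩)
    · exact ⟨_, mem_slotFacts.2 (Or.inl ⟨t, ht, rfl⟩), rfl⟩
    · obtain ⟨F, hF⟩ := exists_slot_eq z
      exact ⟨_, mem_slotFacts.2 (Or.inr ⟨F, rfl⟩), hF⟩

namespace IsBalanced

theorem spawns (hZ : C.IsBalanced Z) (z : C.slots Z p) : C.Spawns z.1.1.1 ⟨p.1, z.1.1.2⟩ := by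
  by_contra h
  have hz := (Finset.mem_sigma.1 z.2).2
  rw [hZ.facts_eq_zero fun h' => h h'.2, Dependencies.maskedLabels_zero] at hz
  exact Finset.notMem_empty _ hz

theorem slotKind_mem_kinds (hZ : C.IsBalanced Z) (z : C.slots Z p) : C.slotKind z ∈ C.kinds :=
  mem_kinds.2 ((mem_sources.1 (Finset.mem_sigma.1 z.2).1).componentKind (hZ.spawns z).occupies _)

theorem occupies_slotKind (hZ : C.IsBalanced Z) (z : C.slots Z p) : C.Occupies (C.slotKind z) p :=
  (hZ.spawns z).occupies.componentKind p.2

theorem slotElt_fst_mem_kinds (hZ : C.IsBalanced Z) (s : C.Slot Z) :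
    (C.slotElt Z s).1 ∈ C.kinds := by
  obtain a | ⟨p, z⟩ := s
  · exact mem_kinds.2 (valid_initial a)
  · exact hZ.slotKind_mem_kinds z

theorem slotElt_snd_lt (hZ : C.IsBalanced Z) (s : C.Slot Z) :
    (C.slotElt Z s).2 < Z (.elems (C.slotElt Z s).1) := by
  obtain a | ⟨p, z⟩ := s
  · simp only [slotElt, hZ.elems_initial, Nat.lt_one_iff]
  · have h_lt : C.slotNumber Z p (C.slotKind z) z < C.slotsOfKind Z p (C.slotKind z) :=
      (C.bijOn_slotNumber Z p (C.slotKind z)).mapsTo (mem_kindSlots.2 rfl)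
    rw [slotElt, ← hZ.slotsOfKind_add_initialIndicator (hZ.slotKind_mem_kinds z)
      (hZ.occupies_slotKind z)]
    exact h_lt.trans_le (Nat.le_add_right _ _)

theorem occupies_slotElt (hZ : C.IsBalanced Z) (h : occursAt (C.slotFacts Z) p s) :
    C.Occupies (C.slotElt Z s).1 p := by
  obtain ⟨a, rfl, ha⟩ | ⟨z, rfl⟩ := occursAt_slotFacts_iff.1 h
  · exact ⟨p, ha, C.incl_refl p⟩
  · exact hZ.occupies_slotKind z

theorem eq_inl_of_occursAt (hZ : C.IsBalanced Z) {a : A} (ha : occursAt C.I₀ p a)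
    (h : occursAt (C.slotFacts Z) p s) (h_elt : (C.slotElt Z s).1 = .initial a) : s = .inl a := by
  obtain ⟨b, rfl, -⟩ | ⟨z, rfl⟩ := occursAt_slotFacts_iff.1 h
  · rw [Kind.initial.inj h_elt]
  · have h_spawns := hZ.spawns z
    rw [eq_of_componentKind_eq h_elt nofun nofun] at h_spawns
    exact (h_spawns.2 ha).elim

theorem exists_occursAt_of_incl (hZ : C.IsBalanced Z) (h : occursAt (C.slotFacts Z) p s)
    (h_incl : C.Incl p p') :
    ∃ s', C.slotElt Z s' = C.slotElt Z s ∧ occursAt (C.slotFacts Z) p' s' := by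
  have h_lt := hZ.slotElt_snd_lt s
  by_cases h_init : ∃ a, (C.slotElt Z s).1 = .initial a ∧ occursAt C.I₀ p' a
  · obtain ⟨a, h_elt, ha⟩ := h_init
    rw [h_elt, hZ.elems_initial, Nat.lt_one_iff] at h_lt
    exact ⟨.inl a, Prod.ext h_elt.symm h_lt.symm,
      occursAt_slotFacts_iff.2 (Or.inl ⟨a, rfl, ha⟩)⟩
  · rw [← hZ.slotsOfKind_add_initialIndicator (hZ.slotElt_fst_mem_kinds s)
      ((hZ.occupies_slotElt h).trans_incl h_incl), initialIndicator, if_neg h_init,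
      add_zero] at h_lt
    obtain ⟨z, hz, h_number⟩ := (C.bijOn_slotNumber Z p' (C.slotElt Z s).1).surjOn h_lt
    have h_kind : C.slotKind z = (C.slotElt Z s).1 := mem_kindSlots.1 hz
    refine ⟨.inr ⟨p', z⟩, Prod.ext h_kind ?_, occursAt_slotFacts_iff.2 (Or.inr ⟨z, rfl⟩)⟩
    rw [slotElt, h_kind, h_number]

theorem eq_of_slotElt_eq (hZ : C.IsBalanced Z) (h : occursAt (C.slotFacts Z) p s)
    (h' : occursAt (C.slotFacts Z) p s') (h_elt : C.slotElt Z s = C.slotElt Z s') : s = s' := by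
  obtain ⟨a, rfl, ha⟩ | ⟨z, rfl⟩ := occursAt_slotFacts_iff.1 h
  · exact (hZ.eq_inl_of_occursAt ha h' (by rw [← h_elt, slotElt])).symm
  obtain ⟨a, rfl, ha⟩ | ⟨z', rfl⟩ := occursAt_slotFacts_iff.1 h'
  · exact hZ.eq_inl_of_occursAt ha h (by rw [h_elt, slotElt])
  obtain ⟨h_kind, h_number⟩ := Prod.ext_iff.1 h_elt
  simp only [slotElt] at h_kind h_number
  rw [h_kind] at h_number
  rw [(C.bijOn_slotNumber Z p _).injOn (mem_kindSlots.2 h_kind) (mem_kindSlots.2 rfl) h_number]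

end IsBalanced

theorem NewFact.satFD_slot {φ : FD σ} (F G : C.NewFact Z φ.rel)
    (h_det : ∀ c, (∀ l ∈ φ.lhs, C.Det φ.rel c l) → C.Det φ.rel c φ.rhs)
    (h : ∀ l ∈ φ.lhs, F.slot l = G.slot l) : F.slot φ.rhs = G.slot φ.rhs := by
  obtain ⟨u, _, q, v, _⟩ := F
  obtain ⟨u', _, q', v', _⟩ := G
  simp only [NewFact.slot, Sum.inr.injEq, Sigma.mk.injEq, heq_eq_eq, true_and,
    Subtype.ext_iff, Prod.mk.injEq] at h ⊢
  obtain ⟨l, hl⟩ := φ.lhs_nonempty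
  obtain ⟨⟨rfl, rfl⟩, -⟩ := h l hl
  exact ⟨⟨rfl, rfl⟩, Dependencies.mask_eq_mask φ.lhs_nonempty h_det fun l hl => (h l hl).2⟩

theorem satFD_slotFacts {φ : FD σ} (h_init : satFD C.I₀ φ)
    (h_det : ∀ c, (∀ l ∈ φ.lhs, C.Det φ.rel c l) → C.Det φ.rel c φ.rhs) :
    satFD (C.slotFacts Z) φ := by
  intro t t' ht ht' h
  obtain ⟨l, hl⟩ := φ.lhs_nonempty
  obtain ⟨t₀, ht₀, rfl⟩ | ⟨F, rfl⟩ := mem_slotFacts.1 ht <;>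
    obtain ⟨t₁, ht₁, rfl⟩ | ⟨G, rfl⟩ := mem_slotFacts.1 ht'
  · exact congrArg Sum.inl (h_init t₀ t₁ ht₀ ht₁ fun i hi => Sum.inl_injective (h i hi))
  · exact (Sum.inl_ne_inr (h l hl)).elim
  · exact (Sum.inr_ne_inl (h l hl)).elim
  · exact F.satFD_slot G h_det h

variable (C Z) in
/-- The pattern formed by the initial and created facts. -/
noncomputable def slotPattern :
    Pattern σ (C.Slot Z) (Kind σ A × ℕ) (Option (Kind σ A × σ.Pos)) where
  facts := C.slotFacts Z
  elt := C.slotElt Z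
  bag := C.slotBag Z
  bag_eq ht i j := by
    obtain ⟨t₀, -, rfl⟩ | ⟨F, rfl⟩ := mem_slotFacts.1 ht <;> rfl

/-! ### Unfolding the slots into the model -/

/-- `f` maps the facts of a bag to facts of `M` whose elements simulate the kinds for `j` further
steps. -/
def Unfolds (j : ℕ) : Option (Kind σ A × σ.Pos) → (C.Slot Z → β) → Prop
  | none, f => ∀ a, f (.inl a) = C.val a
  | some (u, ⟨R, q⟩), f => ∃ t, (⟨R, t⟩ : Fact σ β) ∈ C.M ∧
      (∀ i z, f (.inr ⟨⟨R, i⟩, z⟩) = t i) ∧ ∀ i, C.Sim j (C.componentKind u R q i) (t i)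

theorem Unfolds.sim {j : ℕ} {f : C.Slot Z → β} (h : C.Unfolds j (C.slotBag Z s) f) :
    C.Sim j (C.slotElt Z s).1 (f s) := by
  obtain a | ⟨p, z⟩ := s
  · rw [h a]
    exact Sim.initial C a j
  · obtain ⟨t, -, hf, h_sim⟩ := h
    rw [hf p.2 z]
    exact h_sim p.2

theorem unfolds_none (j : ℕ) (m : β) :
    C.Unfolds j none (Sum.elim C.val fun _ => m : C.Slot Z → β) :=
  fun _ => rfl

theorem exists_unfolds_some {j : ℕ} {q : Fin (σ.ar R)} {t : Fin (σ.ar R) → β}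
    (ht : (⟨R, t⟩ : Fact σ β) ∈ C.M) (h : ∀ i, C.Sim j (C.componentKind u R q i) (t i)) :
    ∃ f : C.Slot Z → β, C.Unfolds j (some (u, ⟨R, q⟩)) f ∧ ∀ i z, f (.inr ⟨⟨R, i⟩, z⟩) = t i := by
  have h_inj : Function.Injective fun i => (⟨R, i⟩ : σ.Pos) :=
    fun _ _ h => eq_of_heq (Sigma.mk.inj h).2
  let default : β := t ⟨0, σ.ar_pos R⟩
  let f : C.Slot Z → β := Sum.elim (fun _ => default) fun z =>
    Function.extend (fun i => (⟨R, i⟩ : σ.Pos)) t (fun _ => default) z.1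
  have hf : ∀ i z, f (.inr ⟨⟨R, i⟩, z⟩) = t i := fun i _ =>
    h_inj.extend_apply t (fun _ => default) i
  exact ⟨f, ⟨t, ht, hf, h⟩, hf⟩

theorem exists_fact_of_sim_slotKind (hZ : C.IsBalanced Z) {j : ℕ} (hj : j < C.radius)
    (z : C.slots Z p) {m : β} (h : C.Sim (j + 1) (C.slotKind z) m) :
    ∃ t, (⟨p.1, t⟩ : Fact σ β) ∈ C.M ∧ t p.2 = m ∧
      ∀ i, C.Sim j (C.componentKind z.1.1.1 p.1 z.1.1.2 i) (t i) := by
  unfold slotKind componentKind at h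
  split_ifs at h with h_own
  · rw [h_own]
    exact h.of_succ.exists_fact_of_occupies (hZ.spawns z).occupies
  · exact h.exists_fact_of_childKind hj

theorem Unfolds.step (hZ : C.IsBalanced Z) {j : ℕ} (hj : j < C.radius) {f : C.Slot Z → β}
    (h_elt : C.slotElt Z s' = C.slotElt Z s) (h : C.Unfolds (j + 1) (C.slotBag Z s) f) :
    ∃ f', C.Unfolds j (C.slotBag Z s') f' ∧ f' s' = f s := by
  have h_sim := h.sim
  rw [← h_elt] at h_sim
  obtain a | ⟨p, z⟩ := s'
  · exact ⟨_, unfolds_none j (f s), h_sim.2.symm⟩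
  · obtain ⟨t, ht, h_eq, h_sim'⟩ := exists_fact_of_sim_slotKind hZ hj z h_sim
    obtain ⟨f', hf', h_val⟩ := exists_unfolds_some ht h_sim'
    exact ⟨f', hf', (h_val p.2 z).trans h_eq⟩

theorem exists_unfolds (hZ : C.IsBalanced Z) (s : C.Slot Z) :
    ∃ f : C.Slot Z → β, C.Unfolds C.radius (C.slotBag Z s) f := by
  obtain a | ⟨p, z⟩ := s
  · exact ⟨_, unfolds_none _ (C.val a)⟩
  · obtain ⟨m, hm⟩ := (mem_sources.1 (Finset.mem_sigma.1 z.2).1).exists_sim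
    obtain ⟨t, ht, -, h_sim⟩ := hm.exists_fact_of_occupies (hZ.spawns z).occupies
    obtain ⟨f, hf, -⟩ := exists_unfolds_some ht h_sim
    exact ⟨f, hf⟩

theorem Unfolds.map_mem {j : ℕ} {f : C.Slot Z → β} {t : Fin (σ.ar R) → C.Slot Z}
    {i : Fin (σ.ar R)} (ht : (⟨R, t⟩ : Fact σ (C.Slot Z)) ∈ C.slotFacts Z)
    (h : C.Unfolds j (C.slotBag Z (t i)) f) : (⟨R, fun i => f (t i)⟩ : Fact σ β) ∈ C.M := by
  obtain ⟨t₀, ht₀, rfl⟩ | ⟨F, rfl⟩ := mem_slotFacts.1 ht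
  · rw [funext fun i => h (t₀ i)]
    exact C.map_mem ht₀
  · obtain ⟨t, ht, hf, -⟩ := h
    have h_eq : (fun i => f (F.slot i)) = t := funext fun i => hf i _
    rwa [h_eq]

/-- The pattern of slots unfolds into `M` along as many moves as the radius. -/
noncomputable def slotUnfolding (hZ : C.IsBalanced Z) :
    (C.slotPattern Z).Unfolding C.M C.radius where
  Good j b f := j ≤ C.radius ∧ C.Unfolds j b f
  map_mem _ ht h := Unfolds.map_mem ht h.2
  step h_elt h := by
    obtain ⟨f', hf', h_eq⟩ := h.2.step hZ h.1 h_elt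
    exact ⟨f', ⟨(Nat.le_succ _).trans h.1, hf'⟩, h_eq⟩
  exists_good s := by
    obtain ⟨f, hf⟩ := exists_unfolds hZ s
    exact ⟨f, le_rfl, hf⟩

end Slots

theorem exists_finite_instance {A : Type} [Finite A] (C : Context σ A β) (q : CQ σ)
    (hq : q.size ≤ C.radius) :
    ∃ (Y : Type) (J : Inst σ Y) (emb : A → Y), J.Finite ∧ emb.Injective ∧
      mapInst emb C.I₀ ⊆ J ∧ (∀ τ : UID σ, C.Incl τ.src τ.dst → satUID J τ) ∧
      (∀ φ : FD σ, satFD C.I₀ φ →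
        (∀ c, (∀ l ∈ φ.lhs, C.Det φ.rel c l) → C.Det φ.rel c φ.rhs) → satFD J φ) ∧
      (satCQ J q → satCQ C.M q) := by
  have := Fintype.ofFinite A
  obtain ⟨Z, hZ⟩ := C.exists_isBalanced
  let N := 2 * C.radius + 1
  refine ⟨_, (C.slotPattern Z).cover N, _, Pattern.cover_finite _ _, ?_,
    Pattern.mapInst_subset_cover Set.subset_union_left, fun τ h_incl => ?_,
    fun φ h_init h_det => ?_, Pattern.satCQ_of_cover (slotUnfolding hZ) hq (Nat.lt_succ_self _)⟩
  · intro a b h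
    exact Kind.initial.inj (congrArg (fun x => x.1.1) h)
  · exact Pattern.satUID_cover fun s hs => hZ.exists_occursAt_of_incl hs h_incl
  · exact Pattern.satFD_cover (fun p s s' => hZ.eq_of_slotElt_eq) (satFD_slotFacts h_init h_det)

end Context

/-! ### Finitely implied dependencies -/

section FinitelyImplied

variable (Su : Set (UID σ)) (Sf : Set (FD σ))

/-- The finite models of the constraints. -/
def FinModel (I : Inst σ ℕ) : Prop := I.Finite ∧ satAllC I Su Sf

/-- The inclusion of position `p` in position `q` holds in all finite models. Unlike `UID`, this
admits the trivial case `p = q`. -/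
def FinIncl (p q : σ.Pos) : Prop :=
  ∀ I, FinModel Su Sf I → ∀ a, occursAt I p a → occursAt I q a

/-- The position `i` of `R` determines the position `j` in all finite models. Unlike `FD`, this
admits the trivial case `i = j`. -/
def FinDet (R : σ.Rel) (i j : Fin (σ.ar R)) : Prop :=
  ∀ I, FinModel Su Sf I → ∀ t u, (⟨R, t⟩ : Fact σ ℕ) ∈ I → (⟨R, u⟩ : Fact σ ℕ) ∈ I →
    t i = u i → t j = u j

/-- The elements at a position of an instance. -/
def occurrences (I : Inst σ ℕ) (p : σ.Pos) : Set ℕ := {a | occursAt I p a}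

/-- In all finite models, `p` has at most as many elements as `p'`. -/
def CardLE (p p' : σ.Pos) : Prop :=
  ∀ I, FinModel Su Sf I → (occurrences I p).ncard ≤ (occurrences I p').ncard

/-- The number of positions with at most as many elements as `p` in all finite models. -/
noncomputable def cardRank (p : σ.Pos) : ℕ := {p' | CardLE Su Sf p' p}.ncard

variable {Su Sf} {I : Inst σ ℕ} {p q : σ.Pos} {R : σ.Rel} {i j : Fin (σ.ar R)}

theorem occurrences_finite (hI : I.Finite) (p : σ.Pos) : (occurrences I p).Finite :=
  (activeDom_finite hI).subset fun _ ⟨_, ht, h_eq⟩ => h_eq ▸ mem_activeDom ht p.2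

theorem cardRank_pos (p : σ.Pos) : 0 < cardRank Su Sf p :=
  (Set.ncard_pos (Set.toFinite _)).2 ⟨p, fun _ _ => le_rfl⟩

namespace CardLE

theorem setOf_subset (h : CardLE Su Sf p q) :
    {p' | CardLE Su Sf p' p} ⊆ {p' | CardLE Su Sf p' q} :=
  fun _ hp I hI => (hp I hI).trans (h I hI)

theorem cardRank_le (h : CardLE Su Sf p q) : cardRank Su Sf p ≤ cardRank Su Sf q :=
  Set.ncard_le_ncard h.setOf_subset (Set.toFinite _)

theorem symm_of_cardRank_eq (h : CardLE Su Sf p q) (h_rank : cardRank Su Sf p = cardRank Su Sf q) :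
    CardLE Su Sf q p := by
  have h_eq := Set.eq_of_subset_of_ncard_le h.setOf_subset h_rank.ge (Set.toFinite _)
  exact h_eq.superset fun _ _ => le_rfl

end CardLE

namespace FinIncl

theorem cardLE (h : FinIncl Su Sf p q) : CardLE Su Sf p q :=
  fun I hI => Set.ncard_le_ncard (h I hI) (occurrences_finite hI.1 q)

theorem symm_of_cardLE (h : FinIncl Su Sf p q) (h_card : CardLE Su Sf q p) : FinIncl Su Sf q p :=
  fun I hI => (Set.eq_of_subset_of_ncard_le (h I hI) (h_card I hI)
    (occurrences_finite hI.1 q)).superset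

theorem occursAt_of_satAllC {M : Inst σ ℕ} (h : FinIncl Su Sf p q)
    (hM : satAllC M {τ | finImpUID Su Sf τ} {φ | finImpFD Su Sf φ}) {a : ℕ}
    (ha : occursAt M p a) : occursAt M q a := by
  by_cases h_eq : p = q
  · exact h_eq ▸ ha
  · exact hM.1 ⟨p, q, h_eq⟩ (fun I hI h_sat => h I ⟨hI, h_sat⟩) a ha

end FinIncl

namespace FinDet

theorem exists_fun (h : FinDet Su Sf R i j) (hI : FinModel Su Sf I) :
    ∃ f : ℕ → ℕ, ∀ t, (⟨R, t⟩ : Fact σ ℕ) ∈ I → t j = f (t i) := by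
  have h_value : ∀ a, ∃ b, ∀ t, (⟨R, t⟩ : Fact σ ℕ) ∈ I → t i = a → t j = b := by
    intro a
    by_cases h_occurs : occursAt I ⟨R, i⟩ a
    · obtain ⟨t, ht, rfl⟩ := h_occurs
      exact ⟨t j, fun u hu h_eq => h I hI u t hu ht h_eq⟩
    · exact ⟨0, fun t ht h_eq => (h_occurs ⟨t, ht, h_eq⟩).elim⟩
  choose f hf using h_value
  exact ⟨f, fun t ht => hf _ t ht rfl⟩

theorem occurrences_eq_image {f : ℕ → ℕ}
    (hf : ∀ t, (⟨R, t⟩ : Fact σ ℕ) ∈ I → t j = f (t i)) :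
    occurrences I ⟨R, j⟩ = f '' occurrences I ⟨R, i⟩ := by
  ext b
  constructor
  · rintro ⟨t, ht, rfl⟩
    exact ⟨t i, ⟨t, ht, rfl⟩, (hf t ht).symm⟩
  · rintro ⟨_, ⟨t, ht, rfl⟩, rfl⟩
    exact ⟨t, ht, hf t ht⟩

theorem cardLE (h : FinDet Su Sf R i j) : CardLE Su Sf ⟨R, j⟩ ⟨R, i⟩ := by
  intro I hI
  obtain ⟨f, hf⟩ := h.exists_fun hI
  rw [occurrences_eq_image hf]
  exact Set.ncard_image_le (occurrences_finite hI.1 _)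

theorem symm_of_cardLE (h : FinDet Su Sf R i j) (h_card : CardLE Su Sf ⟨R, i⟩ ⟨R, j⟩) :
    FinDet Su Sf R j i := by
  intro I hI t u ht hu h_eq
  obtain ⟨f, hf⟩ := h.exists_fun hI
  have h_finite := occurrences_finite hI.1 ⟨R, i⟩
  have h_le := h_card I hI
  rw [occurrences_eq_image hf] at h_le
  have h_inj : Set.InjOn f (occurrences I ⟨R, i⟩) :=
    Set.injOn_of_ncard_image_eq ((Set.ncard_image_le h_finite).antisymm h_le) h_finite
  exact h_inj ⟨t, ht, rfl⟩ ⟨u, hu, rfl⟩ (by rw [← hf t ht, ← hf u hu, h_eq])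

theorem eq_of_satAllC {M : Inst σ ℕ} (h : FinDet Su Sf R i j)
    (hM : satAllC M {τ | finImpUID Su Sf τ} {φ | finImpFD Su Sf φ}) {t u : Fin (σ.ar R) → ℕ}
    (ht : (⟨R, t⟩ : Fact σ ℕ) ∈ M) (hu : (⟨R, u⟩ : Fact σ ℕ) ∈ M) (h_eq : t i = u i) :
    t j = u j := by
  by_cases hij : j = i
  · exact hij ▸ h_eq
  · refine hM.2 ⟨R, {i}, j, Set.singleton_nonempty i, hij⟩ ?_ t u ht hu ?_
    · exact fun I hI h_sat t u ht hu h_agree => h I ⟨hI, h_sat⟩ t u ht hu (h_agree i rfl)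
    · exact fun l hl => (Set.mem_singleton_iff.1 hl).symm ▸ h_eq

end FinDet

variable (Su Sf) in
/-- The finitely implied dependencies, ranked by comparing the numbers of elements at positions.
Counting reverses a dependency between two positions of equal rank. -/
noncomputable def finDependencies : Dependencies σ where
  Incl := FinIncl Su Sf
  Det := FinDet Su Sf
  rank := cardRank Su Sf
  incl_isPreorder :=
    { refl := fun _ _ _ _ ha => ha
      trans := fun _ _ _ h h' I hI a ha => h' I hI a (h I hI a ha) }
  det_isPreorder _ :=
    { refl := fun _ _ _ _ _ _ _ h_eq => h_eq
      trans := fun _ _ _ h h' I hI t u ht hu h_eq => h' I hI t u ht hu (h I hI t u ht hu h_eq) }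
  rank_pos := cardRank_pos
  rank_le_of_incl h := h.cardLE.cardRank_le
  incl_of_rank_eq h h_rank := h.symm_of_cardLE (h.cardLE.symm_of_cardRank_eq h_rank)
  rank_le_of_det h := h.cardLE.cardRank_le
  det_of_rank_eq h h_rank := h.symm_of_cardLE (h.cardLE.symm_of_cardRank_eq h_rank)

/-- The instance `I` over its active domain. -/
def restrictDom (I : Inst σ α) : Inst σ (activeDom I) := {F | mapFact Subtype.val F ∈ I}

theorem mapInst_restrictDom (I : Inst σ α) : mapInst Subtype.val (restrictDom I) = I := by
  ext ⟨R, t⟩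
  constructor
  · rintro ⟨F, hF, h_eq⟩
    exact h_eq ▸ hF
  · exact fun ht => ⟨⟨R, fun i => ⟨t i, mem_activeDom ht i⟩⟩, ht, rfl⟩

theorem satFD_restrictDom {I M : Inst σ α} (hIM : I ⊆ M) {φ : FD σ} (hM : satFD M φ) :
    satFD (restrictDom I) φ :=
  fun _ _ ht hu h_agree => Subtype.ext <|
    hM _ _ (hIM ht) (hIM hu) fun l hl => congrArg Subtype.val (h_agree l hl)

/-- The finitely implied dependencies, the initial instance `I₀` and a model `M` of the finite
closure above it. -/
noncomputable def closureContext {I₀ M : Inst σ ℕ} (hIM : I₀ ⊆ M)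
    (hM : satAllC M {τ | finImpUID Su Sf τ} {φ | finImpFD Su Sf φ}) (radius : ℕ) :
    Context σ (activeDom I₀) ℕ where
  toDependencies := finDependencies Su Sf
  I₀ := restrictDom I₀
  M := M
  val := Subtype.val
  radius := radius
  occursAt_of_incl h ha := h.occursAt_of_satAllC hM ha
  eq_of_det h ht hu h_eq := Subtype.ext <|
    h.eq_of_satAllC hM (hIM ht) (hIM hu) (congrArg Subtype.val h_eq)
  map_mem ht := hIM ht

theorem satCQ_of_finEntails {I₀ M : Inst σ ℕ} (hI₀ : I₀.Finite) (hIM : I₀ ⊆ M)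
    (hM : satAllC M {τ | finImpUID Su Sf τ} {φ | finImpFD Su Sf φ}) {q : CQ σ}
    (h : finEntails I₀ Su Sf q) : satCQ M q := by
  have := (activeDom_finite hI₀).to_subtype
  obtain ⟨Y, J, emb, hJ, h_emb, h_sub, hU, hF, hq⟩ :=
    (closureContext hIM hM q.size).exists_finite_instance q le_rfl
  rw [← mapInst_restrictDom I₀] at h
  refine hq (h.satCQ_of_embedding Subtype.val_injective h_emb hJ h_sub
    (fun τ hτ => hU τ fun I hI => hI.2.1 τ hτ)
    fun φ hφ => hF φ ?_ fun c hc I hI t u ht hu h_eq => ?_)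
  · exact satFD_restrictDom hIM (hM.2 φ fun I _ h_sat => h_sat.2 φ hφ)
  · exact hI.2.2 φ hφ t u ht hu fun l hl => hc l hl I hI t u ht hu h_eq

end FinitelyImplied

/-- **Main Theorem.** Conjunctions of FDs and UIDs are finitely controllable up to
finite closure: for a finite set of FDs and UIDs, a finite instance `I₀` and a
Boolean CQ `q`, finite open-world entailment with respect to the constraints
coincides with unrestricted open-world entailment with respect to their finite
closure. -/
theorem finitely_controllable_up_to_finite_closure
    {σ : Sig} (Su : Set (UID σ)) (Sf : Set (FD σ))
    (hSu : Su.Finite) (hSf : Sf.Finite)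
    (I₀ : Inst σ ℕ) (hI₀ : I₀.Finite) (q : CQ σ) :
    finEntails I₀ Su Sf q ↔
      unrEntails I₀ {τ : UID σ | finImpUID Su Sf τ} {φ : FD σ | finImpFD Su Sf φ} q := by
  constructor
  · intro h M hIM hM
    exact satCQ_of_finEntails hI₀ hIM hM h
  · intro h I hI h_fin h_sat
    exact h I hI ⟨fun τ hτ => hτ I h_fin h_sat, fun φ hφ => hφ I h_fin h_sat⟩

end FQA
end

section
/- Assume the arity-two assumption and that Σ_UID^rev and Σ_UFD are reversible. Then any balanced finite instance I₀ satisfying Σ_UFD has a finite weakly-sound superinstance I (for Σ_UID^rev and I₀) that satisfies Σ_UID^rev ∪ Σ_UFD and such that dom(I) = dom(I₀). -/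
namespace FQA

variable {σ : Sig} {α β : Type}

/-- A unary functional dependency `R^src → R^dst` (nontrivial: `src ≠ dst`). -/
structure UFD (σ : Sig) where
  rel : σ.Rel
  src : Fin (σ.ar rel)
  dst : Fin (σ.ar rel)
  ne : src ≠ dst

/-- The reverse of a UFD. -/
def UFD.rev (φ : UFD σ) : UFD σ := ⟨φ.rel, φ.dst, φ.src, φ.ne.symm⟩

/-- The source position of a UFD, as a position of the signature. -/
def UFD.posSrc (φ : UFD σ) : σ.Pos := ⟨φ.rel, φ.src⟩

/-- The target position of a UFD, as a position of the signature. -/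
def UFD.posDst (φ : UFD σ) : σ.Pos := ⟨φ.rel, φ.dst⟩

/-- An instance satisfies a UFD if any two facts of `rel` agreeing at `src` agree at `dst`. -/
def satUFD (I : Inst σ α) (φ : UFD σ) : Prop :=
  ∀ t u : Fin (σ.ar φ.rel) → α,
    (⟨φ.rel, t⟩ : Fact σ α) ∈ I → (⟨φ.rel, u⟩ : Fact σ α) ∈ I →
    t φ.src = u φ.src → t φ.dst = u φ.dst

/-- `a` wants to appear at position `p` in `I` (with respect to the UIDs `Su`): some
UID of `Su` with target `p` applies to `a`, and `a` does not yet occur at `p`. -/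
def wants (Su : Set (UID σ)) (I : Inst σ α) (p : σ.Pos) (a : α) : Prop :=
  (∃ τ ∈ Su, τ.dst = p ∧ occursAt I τ.src a) ∧ ¬ occursAt I p a

/-- `I` is a weakly-sound superinstance of `I₀` for the UIDs `Su`: elements of `I₀`
only appear at positions where they already appeared or wanted to appear, and new
elements only appear at positions related by UIDs of `Su` in both directions. -/
def WeaklySound (Su : Set (UID σ)) (I₀ I : Inst σ ℕ) : Prop :=
  (∀ a ∈ activeDom I₀, ∀ p : σ.Pos, occursAt I p a →
      occursAt I₀ p a ∨ wants Su I₀ p a) ∧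
  (∀ a ∈ activeDom I, a ∉ activeDom I₀ → ∀ p q : σ.Pos,
      occursAt I p a → occursAt I q a →
      p = q ∨ ∃ h : p ≠ q, (⟨p, q, h⟩ : UID σ) ∈ Su ∧ (⟨q, p, h.symm⟩ : UID σ) ∈ Su)

/-- A set of UIDs is transitively closed. -/
def TransClosedUID (Su : Set (UID σ)) : Prop :=
  ∀ τ ∈ Su, ∀ τ' ∈ Su, τ.dst = τ'.src →
    ∀ h : τ.src ≠ τ'.dst, (⟨τ.src, τ'.dst, h⟩ : UID σ) ∈ Su

/-- A set of UFDs is closed under UFD transitivity. -/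
def TransClosedUFD (Sf : Set (UFD σ)) : Prop :=
  ∀ (R : σ.Rel) (i j k : Fin (σ.ar R)) (h1 : i ≠ j) (h2 : j ≠ k) (h3 : i ≠ k),
    (⟨R, i, j, h1⟩ : UFD σ) ∈ Sf → (⟨R, j, k, h2⟩ : UFD σ) ∈ Sf →
    (⟨R, i, k, h3⟩ : UFD σ) ∈ Sf

/-- A position occurs in some UID of `Su`. -/
def occursInUIDs (Su : Set (UID σ)) (p : σ.Pos) : Prop :=
  ∃ τ ∈ Su, τ.src = p ∨ τ.dst = p

/-- The UIDs `Su` and UFDs `Sf` are reversible: both are closed under implication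
(transitivity), every UID of `Su` has its reverse in `Su`, and every UFD of `Sf`
whose two positions occur in UIDs of `Su` has its reverse in `Sf`. -/
def Reversible (Su : Set (UID σ)) (Sf : Set (UFD σ)) : Prop :=
  TransClosedUID Su ∧ TransClosedUFD Sf ∧
  (∀ τ ∈ Su, τ.rev ∈ Su) ∧
  (∀ φ ∈ Sf, occursInUIDs Su φ.posSrc → occursInUIDs Su φ.posDst → φ.rev ∈ Sf)

/-- An instance is balanced: for every two positions of a relation related by a pair
of inverse UFDs of `Sf`, equally many elements want to appear at the two positions. -/
def Balanced (Su : Set (UID σ)) (Sf : Set (UFD σ)) (I : Inst σ ℕ) : Prop :=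
  ∀ (R : σ.Rel) (i j : Fin (σ.ar R)) (hij : i ≠ j),
    (⟨R, i, j, hij⟩ : UFD σ) ∈ Sf → (⟨R, j, i, hij.symm⟩ : UFD σ) ∈ Sf →
    {a : ℕ | wants Su I ⟨R, i⟩ a}.ncard = {a : ℕ | wants Su I ⟨R, j⟩ a}.ncard

/-!
Every element wanting to appear at a position of `R` does so exactly once if we add facts `R(b)`
whose `i`-th entries enumerate, without repetition, the elements wanting to appear at `R^i`. Such
facts exist because the wants of all positions of `R` are equinumerous. They violate no UFD: an
element wanting a position does not occur there yet, and no two new facts of `R` agree anywhere.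
They trigger no further UID, since by transitivity whatever a UID would demand of an added
occurrence was already wanted in `I₀`.
-/

section Occurrence

variable {I J : Inst σ α} {p : σ.Pos} {a : α}

lemma mem_activeDom_iff : a ∈ activeDom I ↔ ∃ p : σ.Pos, occursAt I p a :=
  ⟨fun ⟨F, hF, i, hi⟩ => ⟨⟨F.1, i⟩, F.2, hF, hi⟩, fun ⟨p, t, ht, hp⟩ => ⟨⟨p.1, t⟩, ht, p.2, hp⟩⟩

lemma occursAt.mem_activeDom (h : occursAt I p a) : a ∈ activeDom I :=
  mem_activeDom_iff.2 ⟨p, h⟩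

lemma wants.mem_activeDom {Su : Set (UID σ)} (h : wants Su I p a) : a ∈ activeDom I :=
  let ⟨⟨_, _, _, hsrc⟩, _⟩ := h
  hsrc.mem_activeDom

lemma finite_activeDom (hI : I.Finite) : (activeDom I).Finite :=
  (hI.biUnion fun F _ => Set.finite_range F.2).subset fun _ ⟨_, hF, i, hi⟩ =>
    Set.mem_biUnion hF ⟨i, hi⟩

lemma finite_setOf_wants (Su : Set (UID σ)) (hI : I.Finite) (p : σ.Pos) :
    {a | wants Su I p a}.Finite :=
  (finite_activeDom hI).subset fun _ h => h.mem_activeDom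

lemma occursAt_union : occursAt (I ∪ J) p a ↔ occursAt I p a ∨ occursAt J p a := by
  simp only [occursAt, Set.mem_union, or_and_right, exists_or]

lemma satUFD_union {φ : UFD σ} (hI : satUFD I φ) (hJ : satUFD J φ)
    (hdisj : ∀ a, occursAt I φ.posSrc a → ¬ occursAt J φ.posSrc a) : satUFD (I ∪ J) φ := by
  rintro t u (ht | ht) (hu | hu) htu
  · exact hI t u ht hu htu
  · exact absurd ⟨u, hu, rfl⟩ (hdisj _ ⟨t, ht, htu⟩)
  · exact absurd ⟨t, ht, rfl⟩ (hdisj _ ⟨u, hu, htu.symm⟩)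
  · exact hJ t u ht hu htu

end Occurrence

section TableInst

/-- The instance in which the facts of each relation `R` are the rows of a table: rows are indexed
by `K R`, and `col ⟨R, i⟩` is the `i`-th column. It builds facts from a prescribed list of elements
at each position. -/
def tableInst {K : σ.Rel → Type} (col : ∀ p : σ.Pos, K p.1 → α) : Inst σ α :=
  {F | ∃ k : K F.1, ∀ i, F.2 i = col ⟨F.1, i⟩ k}

variable {K : σ.Rel → Type} (col : ∀ p : σ.Pos, K p.1 → α)

lemma occursAt_tableInst {p : σ.Pos} {a : α} :
    occursAt (tableInst col) p a ↔ a ∈ Set.range (col p) := by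
  constructor
  · rintro ⟨t, ⟨k, hk⟩, rfl⟩
    exact ⟨k, (hk p.2).symm⟩
  · rintro ⟨k, rfl⟩
    exact ⟨fun i => col ⟨p.1, i⟩ k, ⟨k, fun _ => rfl⟩, rfl⟩

lemma finite_tableInst [∀ R, Finite (K R)] : (tableInst col).Finite := by
  have := σ.rel_fin
  refine (Set.finite_range fun x : Σ R, K R =>
    (⟨x.1, fun i => col ⟨x.1, i⟩ x.2⟩ : Fact σ α)).subset ?_
  rintro ⟨R, t⟩ ⟨k, hk⟩
  exact ⟨⟨R, k⟩, congrArg (Sigma.mk R) (funext hk).symm⟩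

lemma satUFD_tableInst {φ : UFD σ} (hinj : Function.Injective (col φ.posSrc)) :
    satUFD (tableInst col) φ := by
  rintro t u ⟨k, hk⟩ ⟨l, hl⟩ htu
  have hkl : k = l := hinj ((hk φ.src).symm.trans (htu.trans (hl φ.src)))
  subst hkl
  exact (hk φ.dst).trans (hl φ.dst).symm

lemma exists_finite_inst_occursAt_iff {s : σ.Pos → Set α} (hfin : ∀ p, (s p).Finite)
    (hcard : ∀ (R : σ.Rel) (i j : Fin (σ.ar R)), (s ⟨R, i⟩).ncard = (s ⟨R, j⟩).ncard) :
    ∃ J : Inst σ α, J.Finite ∧ (∀ p a, occursAt J p a ↔ a ∈ s p) ∧ ∀ φ, satUFD J φ := by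
  let Row (R : σ.Rel) : Type := s ⟨R, ⟨0, σ.ar_pos R⟩⟩
  have (p : σ.Pos) : Finite (s p) := hfin p
  let enum (p : σ.Pos) : Row p.1 ≃ s p := (Finite.card_eq.1 (hcard p.1 _ p.2)).some
  let col (p : σ.Pos) (k : Row p.1) : α := enum p k
  have hinj (p : σ.Pos) : Function.Injective (col p) :=
    Subtype.val_injective.comp (enum p).injective
  have hrange (p : σ.Pos) : Set.range (col p) = s p :=
    ((enum p).surjective.range_comp Subtype.val).trans Subtype.range_coe
  exact ⟨tableInst col, finite_tableInst col, fun p a => by rw [occursAt_tableInst, hrange],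
    fun φ => satUFD_tableInst col (hinj φ.posSrc)⟩

end TableInst

section FulfillsWants

/-- `I` realizes exactly the wants of `I₀`: its occurrences are those of `I₀` together with the
wanted ones. Every superinstance of `I₀` satisfying the UIDs has at least these occurrences, and a
weakly-sound one with the same domain has no others. -/
def FulfillsWants (Su : Set (UID σ)) (I₀ I : Inst σ α) : Prop :=
  ∀ (p : σ.Pos) (a : α), occursAt I p a ↔ occursAt I₀ p a ∨ wants Su I₀ p a

variable {Su : Set (UID σ)}

lemma FulfillsWants.activeDom_eq {I₀ I : Inst σ α} (h : FulfillsWants Su I₀ I) :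
    activeDom I = activeDom I₀ := by
  ext a
  simp only [mem_activeDom_iff (I := I), h _ a]
  constructor
  · rintro ⟨p, hocc | hwant⟩
    · exact hocc.mem_activeDom
    · exact hwant.mem_activeDom
  · intro ha
    obtain ⟨p, hp⟩ := mem_activeDom_iff.1 ha
    exact ⟨p, Or.inl hp⟩

lemma FulfillsWants.satUID {I₀ I : Inst σ α} (h : FulfillsWants Su I₀ I)
    (htrans : TransClosedUID Su) {τ : UID σ} (hτ : τ ∈ Su) : satUID I τ := by
  intro a ha
  rw [h] at ha ⊢
  refine or_iff_not_imp_left.2 fun hdst => ⟨?_, hdst⟩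
  rcases ha with hocc | ⟨⟨τ', hτ', hcomp, hocc⟩, -⟩
  · exact ⟨τ, hτ, rfl, hocc⟩
  · have hne : τ'.src ≠ τ.dst := fun heq => hdst (heq ▸ hocc)
    exact ⟨_, htrans τ' hτ' τ hτ hcomp hne, rfl, hocc⟩

lemma FulfillsWants.weaklySound {I₀ I : Inst σ ℕ} (h : FulfillsWants Su I₀ I) :
    WeaklySound Su I₀ I :=
  ⟨fun a _ p => (h p a).1, fun _ ha hna => absurd (h.activeDom_eq ▸ ha) hna⟩

lemma exists_fulfillsWants {I₀ : Inst σ α} (hfin : I₀.Finite)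
    (hcard : ∀ (R : σ.Rel) (i j : Fin (σ.ar R)),
      {a | wants Su I₀ ⟨R, i⟩ a}.ncard = {a | wants Su I₀ ⟨R, j⟩ a}.ncard) :
    ∃ I : Inst σ α, I₀ ⊆ I ∧ I.Finite ∧ FulfillsWants Su I₀ I ∧
      ∀ φ, satUFD I₀ φ → satUFD I φ := by
  obtain ⟨J, hJfin, hJocc, hJufd⟩ :=
    exists_finite_inst_occursAt_iff (finite_setOf_wants Su hfin) hcard
  refine ⟨I₀ ∪ J, Set.subset_union_left, hfin.union hJfin, fun p a => ?_, fun φ hφ => ?_⟩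
  · rw [occursAt_union, hJocc, Set.mem_ofPred_eq]
  · exact satUFD_union hφ (hJufd φ) fun a hocc hJ => ((hJocc _ a).1 hJ).2 hocc

end FulfillsWants

lemma Balanced.ncard_wants_eq {Su : Set (UID σ)} {Sf : Set (UFD σ)} {I : Inst σ ℕ}
    (hbal : Balanced Su Sf I)
    (hufd : ∀ (R : σ.Rel) (i j : Fin (σ.ar R)) (h : i ≠ j), (⟨R, i, j, h⟩ : UFD σ) ∈ Sf)
    (R : σ.Rel) (i j : Fin (σ.ar R)) :
    {a | wants Su I ⟨R, i⟩ a}.ncard = {a | wants Su I ⟨R, j⟩ a}.ncard := by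
  rcases eq_or_ne i j with rfl | hij
  · rfl
  · exact hbal R i j hij (hufd R i j hij) (hufd R j i hij.symm)

theorem balanced_weakly_sound_completion_binary_general
    (Su : Set (UID σ)) (Sf : Set (UFD σ)) (htrans : TransClosedUID Su)
    (I₀ : Inst σ ℕ) (hfin : I₀.Finite) (hsat : ∀ φ ∈ Sf, satUFD I₀ φ)
    (hcard : ∀ (R : σ.Rel) (i j : Fin (σ.ar R)),
      {a | wants Su I₀ ⟨R, i⟩ a}.ncard = {a | wants Su I₀ ⟨R, j⟩ a}.ncard) :
    ∃ I : Inst σ ℕ, I₀ ⊆ I ∧ I.Finite ∧ WeaklySound Su I₀ I ∧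
      (∀ τ ∈ Su, satUID I τ) ∧ (∀ φ ∈ Sf, satUFD I φ) ∧
      activeDom I = activeDom I₀ := by
  obtain ⟨I, hsub, hIfin, hI, hufd⟩ := exists_fulfillsWants hfin hcard
  exact ⟨I, hsub, hIfin, hI.weaklySound, fun τ hτ => hI.satUID htrans hτ,
    fun φ hφ => hufd φ (hsat φ hφ), hI.activeDom_eq⟩

/-- Under the arity-two assumption, for reversible UIDs `Su` and UFDs `Sf`, any
balanced finite instance `I₀` satisfying `Sf` has a finite weakly-sound superinstance
satisfying `Su ∪ Sf` whose domain equals that of `I₀`. -/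
theorem balanced_weakly_sound_completion_binary
    {σ : Sig} (Su : Set (UID σ)) (Sf : Set (UFD σ))
    (hrev : Reversible Su Sf)
    (har2 : ∀ R : σ.Rel, σ.ar R = 2)
    (hufd2 : ∀ (R : σ.Rel) (i j : Fin (σ.ar R)) (h : i ≠ j), (⟨R, i, j, h⟩ : UFD σ) ∈ Sf)
    (I₀ : Inst σ ℕ) (hfin : I₀.Finite)
    (hsat : ∀ φ ∈ Sf, satUFD I₀ φ)
    (hbal : Balanced Su Sf I₀) :
    ∃ I : Inst σ ℕ, I₀ ⊆ I ∧ I.Finite ∧ WeaklySound Su I₀ I ∧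
      (∀ τ ∈ Su, satUID I τ) ∧ (∀ φ ∈ Sf, satUFD I φ) ∧
      activeDom I = activeDom I₀ :=
  balanced_weakly_sound_completion_binary_general Su Sf hrev.1 I₀ hfin hsat
    (hbal.ncard_wants_eq hufd2)

end FQA
end
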